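/- Let Q(ξ) = (ξ_1², ξ_1 ξ_2) be a pair of real quadratic forms on ℝ². Then for all exponents p, q ∈ [1,∞] with q > 5 and 1/p + 4/q < 1, there exists a constant C = C(p,q) such that ‖E^Q f‖_{L^q(ℝ^4)} ≤ C ‖f‖_{L^p([0,1]²)} for every measurable function f : [0,1]² → ℂ. Moreover this range is sharp up to endpoints: if for some p, q ∈ [1,∞] and finite C the estimate ‖E^Q f‖_{L^q(ℝ^4)} ≤ C ‖f‖_{L^p([0,1]²)} holds for all measurable f, then q ≥ 5 and 1/p + 4/q ≤ 1. -/

import Mathlib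

open MeasureTheory
open scoped ENNReal

/-- The extension operator associated to the quadratic surface
`S_Q = {(ξ, Q ξ) : ξ ∈ [0,1]^d} ⊆ ℝ^{d+n}`. -/
noncomputable def extOp (d n : ℕ) (Q : (Fin d → ℝ) → Fin n → ℝ)
    (f : (Fin d → ℝ) → ℂ) (x : Fin (d + n) → ℝ) : ℂ :=
  ∫ ξ in Set.Icc (0 : Fin d → ℝ) 1,
    Complex.exp (2 * (Real.pi : ℂ) * Complex.I *
      ((((∑ i : Fin d, x (Fin.castAdd n i) * ξ i) +
        ∑ j : Fin n, x (Fin.natAdd d j) * Q ξ j : ℝ)) : ℂ)) * f ξ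

open scoped ENNReal FourierTransform

/-- character -/
noncomputable def ee (t : ℝ) : ℂ := Complex.exp (2 * (Real.pi : ℂ) * Complex.I * (t : ℂ))

lemma ee_add (a b : ℝ) : ee (a + b) = ee a * ee b := by
  unfold ee; rw [← Complex.exp_add]; congr 1; push_cast; ring

lemma ee_zero : ee 0 = 1 := by simp [ee]

lemma norm_ee (t : ℝ) : ‖ee t‖ = 1 := by
  unfold ee
  rw [Complex.norm_exp]
  simp

lemma enorm_ee (t : ℝ) : ‖ee t‖ₑ = 1 := by
  rw [← ofReal_norm, norm_ee]; simp

@[fun_prop]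
lemma continuous_ee : Continuous ee := by unfold ee; fun_prop

@[fun_prop]
lemma measurable_ee : Measurable ee := continuous_ee.measurable

lemma fourier_eq_ee (h : ℝ → ℂ) (x : ℝ) : 𝓕 h (-x) = ∫ v, ee (x * v) * h v := by
  rw [Real.fourier_eq']
  congr 1; ext v
  simp only [ee, smul_eq_mul]
  congr 2
  simp
  ring

lemma plancherel_aux (h : ℝ → ℂ) (h1 : Integrable h) (h2 : MemLp h 2) :
    (𝓕 h : ℝ → ℂ) =ᵐ[volume] (𝓕 (h2.toLp h : Lp ℂ 2 (volume : Measure ℝ)) : Lp ℂ 2 (volume : Measure ℝ)) := by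
  have hloc : LocallyIntegrable (𝓕 h : ℝ → ℂ) := by
    have : Continuous (𝓕 h : ℝ → ℂ) :=
      VectorFourier.fourierIntegral_continuous Real.continuous_fourierChar
        (by exact continuous_inner) h1
    exact this.locallyIntegrable
  have hloc2 : LocallyIntegrable ((𝓕 (h2.toLp h : Lp ℂ 2 (volume : Measure ℝ)) : Lp ℂ 2 (volume : Measure ℝ)) : ℝ → ℂ) :=
    (Lp.memLp _).locallyIntegrable (by norm_num)
  apply ae_eq_of_integral_contDiff_smul_eq hloc hloc2
  intro g hg hg2
  let gs : SchwartzMap ℝ ℂ := HasCompactSupport.toSchwartzMap (f := fun x => (g x : ℂ))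
    (hg2.comp_left (g := fun x : ℝ => (x : ℂ)) (by simp)) (Complex.ofRealCLM.contDiff.comp hg)
  have key := congrArg (fun T => T gs) (Lp.fourier_toTemperedDistribution_eq (h2.toLp h))
  simp only [TemperedDistribution.fourier_apply, Lp.toTemperedDistribution_apply] at key
  have e1 : ∫ x, g x • (𝓕 h : ℝ → ℂ) x = ∫ x, gs x • (𝓕 h : ℝ → ℂ) x := by
    congr 1
  have e2 : ∫ x, g x • ((𝓕 (h2.toLp h : Lp ℂ 2 (volume : Measure ℝ)) : Lp ℂ 2 (volume : Measure ℝ)) : ℝ → ℂ) x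
      = ∫ x, gs x • ((𝓕 (h2.toLp h : Lp ℂ 2 (volume : Measure ℝ)) : Lp ℂ 2 (volume : Measure ℝ)) : ℝ → ℂ) x := by
    congr 1
  rw [e1, e2, ← key]
  have e3 : ∫ x, (𝓕 gs) x • (h2.toLp h : ℝ → ℂ) x = ∫ x, (𝓕 gs) x • h x := by
    apply integral_congr_ae
    filter_upwards [h2.coeFn_toLp] with x hx
    rw [hx]
  rw [e3]
  have := VectorFourier.integral_fourierIntegral_smul_eq_flip (μ := volume) (ν := volume)
    (L := innerₗ ℝ) (f := (gs : ℝ → ℂ)) (g := h) Real.continuous_fourierChar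
    (by exact continuous_inner) gs.integrable h1
  rw [flip_innerₗ] at this
  exact this.symm

lemma plancherel (h : ℝ → ℂ) (h1 : Integrable h) :
    ∫⁻ x, ‖∫ v, ee (x * v) * h v‖ₑ ^ 2 ≤ ∫⁻ v, ‖h v‖ₑ ^ 2 := by
  by_cases htop : ∫⁻ v, ‖h v‖ₑ ^ 2 = ⊤
  · rw [htop]; exact le_top
  have hn : ∀ k : ℝ → ℂ, eLpNorm k 2 volume ^ 2 = ∫⁻ v, ‖k v‖ₑ ^ 2 := by
    intro k
    have := eLpNorm_nnreal_pow_eq_lintegral (f := k) (p := 2) (μ := volume) (by norm_num)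
    simpa using this
  have h2 : MemLp h 2 := by
    refine ⟨h1.1, ?_⟩
    rw [lt_top_iff_ne_top]
    intro hh
    have := hn h
    rw [hh] at this
    exact htop (by rw [← this]; simp)
  have := plancherel_aux h h1 h2
  calc ∫⁻ x, ‖∫ v, ee (x * v) * h v‖ₑ ^ 2 = ∫⁻ x, ‖𝓕 h (-x)‖ₑ ^ 2 := by
        simp_rw [fourier_eq_ee]
    _ = ∫⁻ x, ‖𝓕 h x‖ₑ ^ 2 := lintegral_neg_eq_self (fun x => ‖𝓕 h x‖ₑ ^ 2)
    _ = eLpNorm (𝓕 h) 2 volume ^ 2 := (hn _).symm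
    _ = eLpNorm ((𝓕 (h2.toLp h : Lp ℂ 2 (volume : Measure ℝ)) : Lp ℂ 2 (volume : Measure ℝ)) : ℝ → ℂ) 2 volume ^ 2 := by
        rw [eLpNorm_congr_ae this]
    _ = eLpNorm h 2 volume ^ 2 := by
        rw [← Lp.enorm_def, ← ofReal_norm, Lp.norm_fourier_eq, ofReal_norm,
          Lp.enorm_def, eLpNorm_congr_ae h2.coeFn_toLp]
    _ ≤ _ := (hn _).le

lemma lint_scale (c : ℝ) (hc : c ≠ 0) (F : ℝ → ℝ≥0∞) :
    ∫⁻ x, F (c * x) = ENNReal.ofReal |c⁻¹| * ∫⁻ x, F x := by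
  have h := Real.map_volume_mul_left hc
  have h2 : ∫⁻ y, F y ∂(Measure.map (fun x => c * x) volume) = ∫⁻ x, F (c * x) :=
    (Homeomorph.mulLeft₀ c hc).isClosedEmbedding.measurableEmbedding.lintegral_map F
  rw [← h2, h, lintegral_smul_measure, smul_eq_mul]

lemma planch_sq (h : ℝ → ℂ) (h1 : IntegrableOn h (Set.Ioi 0)) :
    ∫⁻ x : ℝ, ‖∫ b in Set.Ioi (0:ℝ), ee (x * (2 * b ^ 2)) * h b‖ₑ ^ 2
      ≤ ∫⁻ b in Set.Ioi (0:ℝ), ‖h b‖ₑ ^ 2 * ENNReal.ofReal (1 / (4 * b)) := by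
  set φ : ℝ → ℝ := fun b => 2 * b ^ 2 with hφ
  have hder : ∀ x ∈ Set.Ioi (0:ℝ), HasDerivWithinAt φ (4 * x) (Set.Ioi 0) x := by
    intro x hx
    have := ((hasDerivAt_pow 2 x).const_mul 2).hasDerivWithinAt (s := Set.Ioi (0:ℝ))
    have e : (2 : ℝ) * (((2 : ℕ) : ℝ) * x ^ (2 - 1)) = 4 * x := by norm_num; ring
    rw [e] at this
    exact this
  have hinj : Set.InjOn φ (Set.Ioi 0) := by
    intro x hx y hy hxy
    simp only [hφ, Set.mem_Ioi] at *
    nlinarith [sq_nonneg (x-y)]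
  have himg : φ '' (Set.Ioi 0) = Set.Ioi 0 := by
    ext v
    constructor
    · rintro ⟨b, hb, rfl⟩
      simp only [hφ, Set.mem_Ioi] at *
      positivity
    · intro hv
      simp only [Set.mem_Ioi] at hv
      refine ⟨Real.sqrt (v / 2), by simpa using hv, ?_⟩
      simp only [hφ]
      rw [Real.sq_sqrt (by positivity)]; ring
  set k : ℝ → ℂ := fun v => h (Real.sqrt (v / 2)) / (4 * Real.sqrt (v / 2) : ℝ) with hk
  have hkφ : ∀ b ∈ Set.Ioi (0:ℝ), k (φ b) = h b / (4 * b : ℝ) := by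
    intro b hb
    have hb' : (0:ℝ) ≤ b := le_of_lt hb
    simp only [hk, hφ]
    rw [show 2 * b ^ 2 / 2 = b ^ 2 by ring, Real.sqrt_sq hb']
  have hkint : IntegrableOn k (Set.Ioi 0) := by
    rw [← himg, integrableOn_image_iff_integrableOn_abs_deriv_smul measurableSet_Ioi hder hinj]
    refine h1.congr_fun ?_ measurableSet_Ioi
    intro b hb
    simp only [Set.mem_Ioi] at hb
    simp only
    rw [hkφ b hb, abs_of_pos (by positivity), Complex.real_smul]
    have : ((4 * b : ℝ) : ℂ) ≠ 0 := by exact_mod_cast (by positivity : 4 * b ≠ 0)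
    field_simp
  have e1 : ∀ x : ℝ, ∫ b in Set.Ioi (0:ℝ), ee (x * (2 * b ^ 2)) * h b
      = ∫ v, ee (x * v) * (Set.Ioi 0).indicator k v := by
    intro x
    have : ∫ v, ee (x * v) * (Set.Ioi 0).indicator k v
        = ∫ v in Set.Ioi 0, ee (x * v) * k v := by
      rw [← integral_indicator measurableSet_Ioi]
      congr 1; ext v
      by_cases hv : v ∈ Set.Ioi (0:ℝ) <;> simp [hv]
    rw [this]
    conv_rhs => rw [← himg]
    rw [integral_image_eq_integral_abs_deriv_smul measurableSet_Ioi hder hinj]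
    apply setIntegral_congr_fun measurableSet_Ioi
    intro b hb
    simp only [Set.mem_Ioi] at hb
    simp only
    rw [hkφ b hb, abs_of_pos (by positivity), Complex.real_smul]
    have : ((4 * b : ℝ) : ℂ) ≠ 0 := by exact_mod_cast (by positivity : 4 * b ≠ 0)
    simp only [hφ]
    rw [mul_left_comm ((4 * b : ℝ) : ℂ), mul_div_cancel₀ _ this]
  simp_rw [e1]
  refine (plancherel _ (hkint.integrable_indicator measurableSet_Ioi)).trans ?_
  have : ∫⁻ v, ‖(Set.Ioi 0).indicator k v‖ₑ ^ 2 = ∫⁻ v in Set.Ioi 0, ‖k v‖ₑ ^ 2 := by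
    rw [← lintegral_indicator measurableSet_Ioi]
    congr 1; ext v
    by_cases hv : v ∈ Set.Ioi (0:ℝ) <;> simp [hv]
  rw [this]
  conv_lhs => rw [← himg]
  rw [lintegral_image_eq_lintegral_abs_deriv_mul measurableSet_Ioi hder hinj]
  apply setLIntegral_mono' measurableSet_Ioi
  intro b hb
  rw [hkφ b hb]
  simp only [Set.mem_Ioi] at hb
  rw [abs_of_pos (by positivity), ← ofReal_norm, ← ofReal_norm, norm_div, Complex.norm_real,
    Real.norm_of_nonneg (by positivity), ← ENNReal.ofReal_pow (by positivity), 
    ← ENNReal.ofReal_pow (by positivity), ← ENNReal.ofReal_mul (by positivity),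
    ← ENNReal.ofReal_mul (by positivity)]
  apply ENNReal.ofReal_le_ofReal
  apply le_of_eq
  field_simp

lemma int_ee_mul {α : Type*} [MeasurableSpace α] {μ : Measure α} {k : α → ℂ} (hk : Integrable k μ)
    {θ : α → ℝ} (hθ : Measurable θ) : Integrable (fun a => ee (θ a) * k a) μ := by
  apply hk.bdd_mul (c := 1) (measurable_ee.comp hθ).aestronglyMeasurable
  filter_upwards with a
  simp [norm_ee]

lemma bilin_L2 (k : ℝ → ℝ → ℂ) (hm : Measurable (Function.uncurry k))
    (hi : Integrable (Function.uncurry k) (volume.prod volume)) (h0 : ∀ a b, b ≤ 0 → k a b = 0) :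
    ∫⁻ x3 : ℝ, ∫⁻ x1 : ℝ,
      ‖∫ a, ee (x1 * (2 * a)) * ∫ b, ee (x3 * (2 * a ^ 2 + 2 * b ^ 2)) * k a b‖ₑ ^ 2
    ≤ ∫⁻ a, ∫⁻ b, ‖k a b‖ₑ ^ 2 * ENNReal.ofReal (1 / b) := by
  set K : ℝ → ℝ → ℂ := fun x3 a => ∫ b, ee (x3 * (2 * a ^ 2 + 2 * b ^ 2)) * k a b with hK
  have hKm : StronglyMeasurable (fun p : ℝ × ℝ => K p.1 p.2) := by
    have : Measurable (fun q : (ℝ × ℝ) × ℝ =>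
        ee (q.1.1 * (2 * q.1.2 ^ 2 + 2 * q.2 ^ 2)) * k q.1.2 q.2) := by
      apply Measurable.mul (by fun_prop)
      exact hm.comp (by fun_prop : Measurable (fun q : (ℝ × ℝ) × ℝ => (q.1.2, q.2)))
    exact this.stronglyMeasurable.integral_prod_right'
  have hKi : ∀ x3, Integrable (K x3) := by
    intro x3
    have := int_ee_mul hi (θ := fun p : ℝ × ℝ => x3 * (2 * p.1 ^ 2 + 2 * p.2 ^ 2)) (by fun_prop)
    exact this.integral_prod_left
  have step1 : ∀ x3, ∫⁻ x1 : ℝ, ‖∫ a, ee (x1 * (2 * a)) * K x3 a‖ₑ ^ 2 ≤ ∫⁻ a, ‖K x3 a‖ₑ ^ 2 := by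
    intro x3
    have := lint_scale 2 (by norm_num) (fun y => ‖∫ a, ee (y * a) * K x3 a‖ₑ ^ 2)
    have e : ∀ x1 a : ℝ, x1 * (2 * a) = 2 * x1 * a := by intros; ring
    simp_rw [e]
    rw [this]
    calc _ ≤ 1 * ∫⁻ y, ‖∫ a, ee (y * a) * K x3 a‖ₑ ^ 2 := by
          gcongr
          rw [ENNReal.ofReal_le_one]; norm_num [abs_le]
      _ ≤ _ := by rw [one_mul]; exact plancherel _ (hKi x3)
  calc _ ≤ ∫⁻ x3, ∫⁻ a, ‖K x3 a‖ₑ ^ 2 := lintegral_mono step1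
    _ = ∫⁻ a, ∫⁻ x3, ‖K x3 a‖ₑ ^ 2 := by
      apply lintegral_lintegral_swap
      exact (hKm.measurable.enorm.pow_const 2).aemeasurable
    _ ≤ _ := by
      apply lintegral_mono_ae
      filter_upwards [hi.prod_right_ae] with a ha
      have e1 : ∀ x3, ‖K x3 a‖ₑ = ‖∫ b in Set.Ioi (0:ℝ), ee (x3 * (2 * b ^ 2)) * k a b‖ₑ := by
        intro x3
        rw [setIntegral_eq_integral_of_forall_compl_eq_zero]
        · have : K x3 a = ee (x3 * (2 * a ^ 2)) * ∫ b, ee (x3 * (2 * b ^ 2)) * k a b := by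
            simp only [hK]
            rw [← integral_const_mul]
            congr 1; ext b
            rw [mul_add, ee_add]; ring
          rw [this, enorm_mul, enorm_ee, one_mul]
        · intro b hb
          rw [h0 a b (by simpa using hb), mul_zero]
      simp_rw [e1]
      refine (planch_sq (k a) ha.integrableOn).trans ?_
      refine (lintegral_mono' Measure.restrict_le_self le_rfl).trans ?_
      apply lintegral_mono
      intro b
      simp only
      by_cases hb : b ≤ 0
      · simp [h0 a b hb]
      · push Not at hb
        refine mul_le_mul_right (ENNReal.ofReal_le_ofReal ?_) _
        apply one_div_le_one_div_of_le hb
        linarith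

/-- rotation map -/
noncomputable def rotE : (ℝ × ℝ) ≃ₗ[ℝ] (ℝ × ℝ) where
  toFun z := (z.1 + z.2, z.1 - z.2)
  invFun z := ((z.1 + z.2) / 2, (z.1 - z.2) / 2)
  left_inv z := by ext <;> simp
  right_inv z := by ext <;> simp <;> ring
  map_add' x y := by ext <;> simp <;> ring
  map_smul' c x := by ext <;> simp <;> ring

lemma rotE_apply (z : ℝ × ℝ) : rotE z = (z.1 + z.2, z.1 - z.2) := rfl

lemma rot_det : LinearMap.det (rotE : (ℝ × ℝ) →ₗ[ℝ] (ℝ × ℝ)) = -2 := by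
  rw [← LinearMap.det_toMatrix (Module.Basis.finTwoProd ℝ), Matrix.det_fin_two]
  simp [LinearMap.toMatrix_apply, rotE_apply]
  norm_num

lemma rot_map : Measure.map rotE (volume : Measure (ℝ × ℝ)) = ENNReal.ofReal (1/2) • volume := by
  have := Measure.map_linearMap_addHaar_eq_smul_addHaar (volume : Measure (ℝ × ℝ))
    (f := (rotE : (ℝ × ℝ) →ₗ[ℝ] (ℝ × ℝ))) (by rw [rot_det]; norm_num)
  rw [rot_det] at this
  have e : |(-2:ℝ)⁻¹| = 1 / 2 := by norm_num [abs_of_neg]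
  rw [e] at this
  exact this

lemma rot_emb : MeasurableEmbedding rotE :=
  rotE.toContinuousLinearEquiv.toHomeomorph.isClosedEmbedding.measurableEmbedding

lemma rot_lint (F : ℝ × ℝ → ℝ≥0∞) :
    ∫⁻ z : ℝ × ℝ, F (z.1 + z.2, z.1 - z.2) = ENNReal.ofReal (1/2) * ∫⁻ z : ℝ × ℝ, F z := by
  have := rot_emb.lintegral_map (μ := volume) F
  rw [rot_map, lintegral_smul_measure] at this
  exact this.symm

lemma rot_int (F : ℝ × ℝ → ℂ) :
    ∫ z : ℝ × ℝ, F z = 2 * ∫ z : ℝ × ℝ, F (z.1 + z.2, z.1 - z.2) := by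
  have := rot_emb.integral_map (μ := volume) F
  rw [rot_map, integral_smul_measure] at this
  have h2 : ∫ z : ℝ × ℝ, F (z.1 + z.2, z.1 - z.2) = ((1/2 : ℝ)) • ∫ z : ℝ × ℝ, F z := by
    rw [ENNReal.toReal_ofReal (by norm_num)] at this
    exact this.symm
  rw [h2, Complex.real_smul]
  push_cast
  ring

lemma rot_integrable {F : ℝ × ℝ → ℂ} (hF : Integrable F) :
    Integrable (fun z : ℝ × ℝ => F (z.1 + z.2, z.1 - z.2)) := by
  have : Integrable F (Measure.map rotE volume) := by
    rw [rot_map]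
    exact hF.smul_measure ENNReal.ofReal_ne_top
  exact (rot_emb.integrable_map_iff).1 this

lemma integral_even (F : ℝ → ℂ) (hi : Integrable F) (h : ∀ b, F (-b) = F b) :
    ∫ b, F b = 2 * ∫ b in Set.Ioi 0, F b := by
  rw [← integral_add_compl (measurableSet_Ioi (a := (0:ℝ))) hi, Set.compl_Ioi]
  have := integral_comp_neg_Ioi (0:ℝ) F
  simp only [h, neg_zero] at this
  rw [← this]; ring

/-- assumptions on a profile -/
structure Prof (g : ℝ → ℂ) : Prop where
  meas : Measurable g
  bdd : ∀ x, ‖g x‖ₑ ≤ 1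
  supp : ∀ x, x ∉ Set.Icc (0:ℝ) 1 → g x = 0

namespace Prof
variable {g : ℝ → ℂ}

lemma integrable (hg : Prof g) : Integrable g := by
  have : IntegrableOn g (Set.Icc 0 1) := by
    apply Measure.integrableOn_of_bounded (M := 1) (by simp) hg.meas.aestronglyMeasurable
    filter_upwards with x
    have := hg.bdd x
    rw [← ofReal_norm] at this
    exact ENNReal.ofReal_le_one.1 this
  rw [integrableOn_iff_integrable_of_support_subset] at this
  · exact this
  · intro x hx
    by_contra h
    exact hx (hg.supp x h)

lemma N_le (hg : Prof g) : ∫⁻ x, ‖g x‖ₑ ^ 2 ≤ 1 := by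
  calc ∫⁻ x, ‖g x‖ₑ ^ 2 ≤ ∫⁻ x, (Set.Icc (0:ℝ) 1).indicator 1 x := by
        apply lintegral_mono
        intro x
        by_cases hx : x ∈ Set.Icc (0:ℝ) 1
        · simp only [hx, Set.indicator_of_mem]
          exact pow_le_one' (hg.bdd x) 2
        · simp [hg.supp x hx]
    _ = 1 := by rw [lintegral_indicator_one measurableSet_Icc]; simp

end Prof

/-- parabola extension -/
noncomputable def pu (g : ℝ → ℂ) (x1 x3 : ℝ) : ℂ := ∫ ξ, ee (x1 * ξ + x3 * ξ ^ 2) * g ξ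

/-- far part kernel -/
noncomputable def kfar (g : ℝ → ℂ) (δ : ℝ) (a b : ℝ) : ℂ :=
  if δ < b then g (a + b) * g (a - b) else 0

/-- far part -/
noncomputable def Ufar (g : ℝ → ℂ) (δ x1 x3 : ℝ) : ℂ :=
  ∫ a, ee (x1 * (2 * a)) * ∫ b, ee (x3 * (2 * a ^ 2 + 2 * b ^ 2)) * kfar g δ a b

/-- autocorrelation -/
noncomputable def Aut (g : ℝ → ℂ) (b : ℝ) : ℝ≥0∞ := ∫⁻ a, ‖g (a + b)‖ₑ ^ 2 * ‖g (a - b)‖ₑ ^ 2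

section
variable {g : ℝ → ℂ}

lemma kfar_meas (hg : Prof g) (δ : ℝ) : Measurable (Function.uncurry (kfar g δ)) := by
  unfold Function.uncurry kfar
  refine Measurable.ite (measurableSet_lt measurable_const measurable_snd) ?_ measurable_const
  exact (hg.meas.comp (by fun_prop)).mul (hg.meas.comp (by fun_prop))

lemma gg_int (hg : Prof g) : Integrable (fun z : ℝ × ℝ => g (z.1 + z.2) * g (z.1 - z.2)) :=
  rot_integrable (hg.integrable.mul_prod hg.integrable)

lemma kfar_int (hg : Prof g) (δ : ℝ) :
    Integrable (Function.uncurry (kfar g δ)) (volume.prod volume) := by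
  refine (gg_int hg).mono (kfar_meas hg δ).aestronglyMeasurable ?_
  filter_upwards with z
  simp only [Function.uncurry, kfar]
  split_ifs
  · exact le_rfl
  · rw [norm_zero]; exact norm_nonneg _

lemma amgm (x y : ℝ≥0∞) : x * y ≤ x ^ 2 + y ^ 2 := by
  rcases le_total x y with h | h
  · calc x * y ≤ y * y := by gcongr
      _ = y ^ 2 := by ring
      _ ≤ _ := le_add_self
  · calc x * y ≤ x * x := by gcongr
      _ = x ^ 2 := by ring
      _ ≤ _ := le_self_add

lemma usq_bound (hg : Prof g) (δ : ℝ) (hδ : 0 < δ) (x1 x3 : ℝ) :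
    ‖pu g x1 x3‖ₑ ^ 2 ≤ 8 * (ENNReal.ofReal δ * ∫⁻ x, ‖g x‖ₑ ^ 2) + 4 * ‖Ufar g δ x1 x3‖ₑ := by
  set N := ∫⁻ x, ‖g x‖ₑ ^ 2 with hN
  set S : ℝ × ℝ → ℂ := fun z =>
    ee (x1 * (2 * z.1) + x3 * (2 * z.1 ^ 2 + 2 * z.2 ^ 2)) * (g (z.1 + z.2) * g (z.1 - z.2)) with hS
  have hSi : Integrable S (volume.prod volume) := int_ee_mul (gg_int hg) (by fun_prop)
  have h1 : pu g x1 x3 ^ 2 = 2 * ∫ z, S z := by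
    rw [pow_two, pu, ← integral_prod_mul, ← Measure.volume_eq_prod, rot_int]
    congr 1
    congr 1; ext z
    simp only [hS]
    have : x1 * (2 * z.1) + x3 * (2 * z.1 ^ 2 + 2 * z.2 ^ 2)
      = (x1 * (z.1 + z.2) + x3 * (z.1 + z.2) ^ 2) + (x1 * (z.1 - z.2) + x3 * (z.1 - z.2) ^ 2) := by
      ring
    rw [this, ee_add (x1 * (z.1 + z.2) + x3 * (z.1 + z.2) ^ 2)]
    exact mul_mul_mul_comm _ _ _ _
  have h2 : ∫ z, S z = 2 * ∫ a, ∫ b in Set.Ioi 0, S (a, b) := by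
    rw [Measure.volume_eq_prod, integral_prod _ hSi, ← integral_const_mul]
    apply integral_congr_ae
    filter_upwards [hSi.prod_right_ae] with a ha
    apply integral_even _ ha
    intro b
    simp only [hS]
    rw [neg_sq, sub_neg_eq_add, ← sub_eq_add_neg, mul_comm (g (a - b))]
  set Sn : ℝ × ℝ → ℂ := (Set.univ ×ˢ Set.Ioc 0 δ).indicator S with hSn
  set Sf : ℝ × ℝ → ℂ := (Set.univ ×ˢ Set.Ioi δ).indicator S with hSf
  have hSni : Integrable Sn (volume.prod volume) :=
    hSi.indicator (MeasurableSet.univ.prod measurableSet_Ioc)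
  have hSfi : Integrable Sf (volume.prod volume) :=
    hSi.indicator (MeasurableSet.univ.prod measurableSet_Ioi)
  have h3 : ∫ a, ∫ b in Set.Ioi 0, S (a, b) = (∫ z, Sn z) + ∫ z, Sf z := by
    rw [Measure.volume_eq_prod, ← integral_add hSni hSfi, integral_prod (fun z => Sn z + Sf z) (hSni.add hSfi)]
    congr 1; ext a
    try simp only [Pi.add_apply]
    rw [← integral_indicator measurableSet_Ioi]
    congr 1; ext b
    simp only [hSn, hSf, Set.indicator, Set.mem_prod, Set.mem_univ, true_and, Set.mem_Ioc,
      Set.mem_Ioi]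
    by_cases hb : 0 < b
    · by_cases hb2 : b ≤ δ
      · simp [hb, hb2, not_lt.2 hb2]
      · simp [hb, hb2, not_le.1 hb2]
    · have : ¬ δ < b := by push Not at hb ⊢; linarith
      simp [hb, this]
  have h4 : ∫ z, Sf z = Ufar g δ x1 x3 := by
    rw [Measure.volume_eq_prod, integral_prod _ hSfi, Ufar]
    congr 1; ext a
    rw [← integral_const_mul]
    congr 1; ext b
    simp only [hSf, hS, Set.indicator, Set.mem_prod, Set.mem_univ, true_and, Set.mem_Ioi, kfar]
    split_ifs
    · rw [ee_add]; ring
    · simp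
  have h5 : ‖∫ z, Sn z‖ₑ ≤ 2 * (ENNReal.ofReal δ * N) := by
    refine (enorm_integral_le_lintegral_enorm _).trans ?_
    have hle : ∀ z : ℝ × ℝ, ‖Sn z‖ₑ ≤ (Set.Ioc 0 δ).indicator
        (fun b => ‖g (z.1 + b)‖ₑ ^ 2 + ‖g (z.1 - b)‖ₑ ^ 2) z.2 := by
      intro z
      by_cases hz : z.2 ∈ Set.Ioc 0 δ
      · simp only [hSn, hS, Set.indicator, Set.mem_prod, Set.mem_univ, true_and, hz, if_true]
        rw [enorm_mul, enorm_ee, one_mul, enorm_mul]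
        exact amgm _ _
      · simp [hSn, Set.indicator, hz]
    refine (lintegral_mono hle).trans ?_
    rw [Measure.volume_eq_prod, lintegral_prod_symm']
    · calc _ = ∫⁻ b in Set.Ioc 0 δ, 2 * N := by
            rw [← lintegral_indicator measurableSet_Ioc]
            congr 1; ext b
            by_cases hb : b ∈ Set.Ioc 0 δ
            · simp only [hb, Set.indicator_of_mem]
              rw [lintegral_add_left]
              · rw [lintegral_add_right_eq_self (fun x => ‖g x‖ₑ ^ 2),
                  lintegral_sub_right_eq_self (fun x => ‖g x‖ₑ ^ 2), two_mul]
              · exact (hg.meas.comp (by fun_prop)).enorm.pow_const 2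
            · simp [hb]
        _ = _ := by
            rw [setLIntegral_const, Real.volume_Ioc, sub_zero]; ring
        _ ≤ _ := le_rfl
    · have : Measurable (fun z : ℝ × ℝ => ‖g (z.1 + z.2)‖ₑ ^ 2 + ‖g (z.1 - z.2)‖ₑ ^ 2) :=
        ((hg.meas.comp (by fun_prop)).enorm.pow_const 2).add
          ((hg.meas.comp (by fun_prop)).enorm.pow_const 2)
      have h6 := this.indicator (MeasurableSet.univ.prod (measurableSet_Ioc (a := (0:ℝ)) (b := δ)))
      convert h6 using 1
      ext z; simp [Set.indicator]
  rw [← enorm_pow, h1, h2, h3, h4]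
  calc ‖(2:ℂ) * (2 * ((∫ z, Sn z) + Ufar g δ x1 x3))‖ₑ
      = 4 * ‖(∫ z, Sn z) + Ufar g δ x1 x3‖ₑ := by
        rw [← mul_assoc, enorm_mul]
        congr 1
        rw [← ofReal_norm]
        norm_num
    _ ≤ 4 * (2 * (ENNReal.ofReal δ * N) + ‖Ufar g δ x1 x3‖ₑ) := by
        gcongr
        exact (enorm_add_le _ _).trans (by gcongr)
    _ = _ := by ring

lemma Aut_meas (hg : Prof g) : Measurable (Aut g) := by
  unfold Aut
  apply Measurable.lintegral_prod_right'
    (f := fun z : ℝ × ℝ => ‖g (z.2 + z.1)‖ₑ ^ 2 * ‖g (z.2 - z.1)‖ₑ ^ 2)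
  exact ((hg.meas.comp (by fun_prop)).enorm.pow_const 2).mul
          ((hg.meas.comp (by fun_prop)).enorm.pow_const 2)

lemma Aut_le (hg : Prof g) (b : ℝ) : Aut g b ≤ ∫⁻ x, ‖g x‖ₑ ^ 2 := by
  rw [← lintegral_add_right_eq_self (fun x => ‖g x‖ₑ ^ 2) b]
  apply lintegral_mono
  intro a
  calc _ ≤ ‖g (a + b)‖ₑ ^ 2 * 1 := by
        simp only
        gcongr
        exact pow_le_one' (hg.bdd _) 2
    _ = _ := mul_one _

lemma Aut_neg (b : ℝ) : Aut g (-b) = Aut g b := by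
  unfold Aut
  congr 1; ext a
  rw [sub_neg_eq_add, ← sub_eq_add_neg, mul_comm]

lemma Aut_total (hg : Prof g) :
    (∫⁻ x, ‖g x‖ₑ ^ 2) ^ 2 ≤ 4 * ∫⁻ b in Set.Ioi 0, Aut g b := by
  have hm : Measurable (fun x => ‖g x‖ₑ ^ 2) := hg.meas.enorm.pow_const 2
  have h1 : (∫⁻ x, ‖g x‖ₑ ^ 2) ^ 2 = ∫⁻ z : ℝ × ℝ, ‖g z.1‖ₑ ^ 2 * ‖g z.2‖ₑ ^ 2 := by
    rw [Measure.volume_eq_prod, lintegral_prod_mul hm.aemeasurable hm.aemeasurable, pow_two]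
  have h2 := rot_lint (fun z => ‖g z.1‖ₑ ^ 2 * ‖g z.2‖ₑ ^ 2)
  rw [← h1] at h2
  simp only at h2
  rw [Measure.volume_eq_prod, lintegral_prod_symm'] at h2
  · have h3 : ∫⁻ b, Aut g b = 2 * ∫⁻ b in Set.Ioi 0, Aut g b := by
      rw [← lintegral_add_compl _ (measurableSet_Ioi (a := (0:ℝ))), Set.compl_Ioi, two_mul]
      congr 1
      rw [setLIntegral_congr Iio_ae_eq_Iic.symm, ← lintegral_indicator measurableSet_Iio,
        ← lintegral_neg_eq_self, ← lintegral_indicator measurableSet_Ioi]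
      congr 1; ext b
      simp [Set.indicator, Aut_neg]
    have h4 : ∫⁻ b, Aut g b = ENNReal.ofReal (1 / 2) * (∫⁻ x, ‖g x‖ₑ ^ 2) ^ 2 := h2
    have h5 : (∫⁻ x, ‖g x‖ₑ ^ 2) ^ 2 = 2 * (ENNReal.ofReal (1 / 2) * (∫⁻ x, ‖g x‖ₑ ^ 2) ^ 2) := by
      rw [← mul_assoc]
      have : (2:ℝ≥0∞) * ENNReal.ofReal (1/2) = 1 := by
        rw [show (2:ℝ≥0∞) = ENNReal.ofReal 2 by simp, ← ENNReal.ofReal_mul (by norm_num)]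
        norm_num
      rw [this, one_mul]
    rw [h5, ← h4, h3, ← mul_assoc]
    norm_num
  · exact ((hg.meas.comp (by fun_prop)).enorm.pow_const 2).mul
          ((hg.meas.comp (by fun_prop)).enorm.pow_const 2)

lemma Ufar_L2 (hg : Prof g) (δ : ℝ) (hδ : 0 < δ) :
    ∫⁻ x3 : ℝ, ∫⁻ x1 : ℝ, ‖Ufar g δ x1 x3‖ₑ ^ 2
      ≤ ∫⁻ b in Set.Ioi δ, Aut g b * ENNReal.ofReal (1 / b) := by
  refine (bilin_L2 (kfar g δ) (kfar_meas hg δ) (kfar_int hg δ) ?_).trans ?_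
  · intro a b hb
    simp [kfar, not_lt.2 (hb.trans hδ.le)]
  · rw [lintegral_lintegral_swap]
    · rw [← lintegral_indicator measurableSet_Ioi]
      apply lintegral_mono
      intro b
      by_cases hb : δ < b
      · simp only [kfar, hb, if_true, Set.mem_Ioi, Set.indicator_of_mem]
        rw [lintegral_mul_const', Aut]
        · simp_rw [enorm_mul, mul_pow]; exact le_rfl
        · exact ENNReal.ofReal_ne_top
      · simp [kfar, hb]
    · apply Measurable.aemeasurable
      exact ((kfar_meas hg δ).enorm.pow_const 2).mul
        (by fun_prop : Measurable (fun z : ℝ × ℝ => ENNReal.ofReal (1 / z.2)))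
end

lemma lint_rpow (r c : ℝ) (hr : -1 < r) (hc : 0 ≤ c) :
    ∫⁻ t in Set.Ioo 0 c, ENNReal.ofReal (t ^ r) = ENNReal.ofReal (c ^ (r + 1) / (r + 1)) := by
  rw [setLIntegral_congr Ioo_ae_eq_Ioc, ← ofReal_integral_eq_lintegral_ofReal]
  · rw [← intervalIntegral.integral_of_le hc, integral_rpow (Or.inl hr),
      Real.zero_rpow (by linarith), sub_zero]
  · exact (intervalIntegrable_iff_integrableOn_Ioc_of_le hc).1
      (intervalIntegral.intervalIntegrable_rpow' hr)
  · filter_upwards [ae_restrict_mem measurableSet_Ioc] with t ht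
    exact Real.rpow_nonneg ht.1.le _

lemma numeric (ρ : ℝ) (h1 : 5 / 2 < ρ) (h2 : ρ < 3) : ∃ C : ℝ≥0∞, C ≠ ⊤ ∧
    ∀ (A : ℝ → ℝ≥0∞) (n : ℝ), Measurable A → 0 < n → (∀ b, A b ≤ ENNReal.ofReal n) →
      ENNReal.ofReal n ^ 2 ≤ 4 * ∫⁻ b in Set.Ioi 0, A b →
      ∫⁻ b in Set.Ioi 0, A b * ENNReal.ofReal (n ^ (ρ - 2) * b ^ (ρ - 3))
        ≤ C * ∫⁻ b in Set.Ioi 0, A b * ENNReal.ofReal (b ^ (2 * ρ - 5)) := by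
  set c1 : ℝ := (1 / 8) ^ (ρ - 2) / (ρ - 2) with hc1
  have hc1p : 0 ≤ c1 := by
    apply div_nonneg (by positivity); linarith
  set c2 : ℝ := 8 * 8 ^ (2 * ρ - 5) with hc2
  set c3 : ℝ := 8 ^ (ρ - 2) with hc3
  refine ⟨ENNReal.ofReal c1 * ENNReal.ofReal c2 + ENNReal.ofReal c3, by
    simp [ENNReal.mul_eq_top], ?_⟩
  intro A n hA hn hAn htot
  set R := ∫⁻ b in Set.Ioi 0, A b * ENNReal.ofReal (b ^ (2 * ρ - 5)) with hR
  have hsplit : Set.Ioi (0:ℝ) = Set.Ioo 0 (n/8) ∪ Set.Ici (n/8) :=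
    (Set.Ioo_union_Ici_eq_Ioi (by positivity)).symm
  have hdisj : Disjoint (Set.Ioo (0:ℝ) (n/8)) (Set.Ici (n/8)) := by
    rw [Set.disjoint_left]; intro x hx hx2
    exact absurd hx.2 (not_lt.2 hx2)
  -- main lower bound
  have hfar : ∀ F : ℝ → ℝ≥0∞, ∀ c : ℝ≥0∞, c ≠ ⊤ →
      (∀ b ∈ Set.Ici (n/8), F b ≤ c * ENNReal.ofReal (b ^ (2 * ρ - 5))) →
      ∫⁻ b in Set.Ici (n/8), A b * F b ≤ c * R := by
    intro F c hc hF
    calc ∫⁻ b in Set.Ici (n/8), A b * F b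
        ≤ ∫⁻ b in Set.Ici (n/8), c * (A b * ENNReal.ofReal (b ^ (2 * ρ - 5))) := by
          apply setLIntegral_mono' measurableSet_Ici
          intro b hb
          calc A b * F b ≤ A b * (c * ENNReal.ofReal (b ^ (2 * ρ - 5))) := by
                gcongr; exact hF b hb
            _ = _ := by ring
      _ = c * ∫⁻ b in Set.Ici (n/8), A b * ENNReal.ofReal (b ^ (2 * ρ - 5)) :=
          lintegral_const_mul' _ _ hc
      _ ≤ c * R := by
          gcongr
          apply lintegral_mono_set
          rw [hsplit]; exact Set.subset_union_right
  have hlow : ENNReal.ofReal n ^ 2 ≤ 8 * ∫⁻ b in Set.Ici (n/8), A b := by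
    rw [hsplit, lintegral_union measurableSet_Ici hdisj] at htot
    have hs : ∫⁻ b in Set.Ioo 0 (n/8), A b ≤ ENNReal.ofReal (n ^ 2 / 8) := by
      calc _ ≤ ∫⁻ b in Set.Ioo 0 (n/8), ENNReal.ofReal n := lintegral_mono (fun b => hAn b)
        _ = _ := by
          rw [setLIntegral_const, Real.volume_Ioo, ← ENNReal.ofReal_mul hn.le]
          congr 1; ring
    have h3 : ENNReal.ofReal n ^ 2 ≤ ENNReal.ofReal (n ^ 2 / 2)
        + 4 * ∫⁻ b in Set.Ici (n/8), A b := by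
      refine htot.trans ?_
      rw [mul_add]
      gcongr
      calc 4 * ∫⁻ b in Set.Ioo 0 (n/8), A b ≤ ENNReal.ofReal 4 * ENNReal.ofReal (n ^ 2 / 8) := by
            gcongr; simp
        _ = _ := by rw [← ENNReal.ofReal_mul (by norm_num)]; congr 1; ring
    have h4 : ENNReal.ofReal n ^ 2 = ENNReal.ofReal (n ^ 2 / 2) + ENNReal.ofReal (n ^ 2 / 2) := by
      rw [← ENNReal.ofReal_add (by positivity) (by positivity), ← ENNReal.ofReal_pow hn.le]
      congr 1; ring
    rw [h4] at h3
    have h5 := (ENNReal.add_le_add_iff_left ENNReal.ofReal_ne_top).1 h3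
    rw [h4]
    calc _ ≤ 4 * (∫⁻ b in Set.Ici (n/8), A b) + 4 * ∫⁻ b in Set.Ici (n/8), A b := by gcongr
      _ = _ := by ring
  have hlow2 : ENNReal.ofReal (n ^ (2 * ρ - 3)) ≤ ENNReal.ofReal c2 * R := by
    have e : n ^ (2 * ρ - 3) = n ^ 2 * n ^ (2 * ρ - 5) := by
      rw [← Real.rpow_natCast, ← Real.rpow_add hn]; congr 1; push_cast; ring
    rw [e, ENNReal.ofReal_mul (by positivity), ENNReal.ofReal_pow hn.le]
    calc _ ≤ (8 * ∫⁻ b in Set.Ici (n/8), A b) * ENNReal.ofReal (n ^ (2 * ρ - 5)) := by gcongr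
      _ = 8 * ∫⁻ b in Set.Ici (n/8), A b * ENNReal.ofReal (n ^ (2 * ρ - 5)) := by
          rw [lintegral_mul_const _ hA, mul_assoc]
      _ ≤ 8 * (ENNReal.ofReal (8 ^ (2 * ρ - 5)) * R) := by
          gcongr
          apply hfar _ _ ENNReal.ofReal_ne_top
          intro b hb
          have hb' : n / 8 ≤ b := hb
          rw [← ENNReal.ofReal_mul (by positivity), ← Real.mul_rpow (by norm_num) (by linarith)]
          apply ENNReal.ofReal_le_ofReal
          apply Real.rpow_le_rpow hn.le (by linarith) (by linarith)
      _ = _ := by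
          rw [hc2, ENNReal.ofReal_mul (by norm_num)]
          simp [mul_assoc]
  rw [hsplit, lintegral_union measurableSet_Ici hdisj, add_mul]
  apply add_le_add
  · calc _ ≤ ∫⁻ b in Set.Ioo 0 (n/8), ENNReal.ofReal (n * n ^ (ρ - 2)) * ENNReal.ofReal (b ^ (ρ - 3)) := by
          apply lintegral_mono
          intro b
          simp only
          rw [ENNReal.ofReal_mul (by positivity), ENNReal.ofReal_mul hn.le, mul_assoc]
          gcongr
          exact hAn b
      _ = ENNReal.ofReal (n * n ^ (ρ - 2)) * ENNReal.ofReal ((n/8) ^ (ρ - 3 + 1) / (ρ - 3 + 1)) := by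
          rw [lintegral_const_mul' _ _ ENNReal.ofReal_ne_top, lint_rpow _ _ (by linarith) (by positivity)]
      _ = ENNReal.ofReal c1 * ENNReal.ofReal (n ^ (2 * ρ - 3)) := by
          rw [← ENNReal.ofReal_mul (by positivity), ← ENNReal.ofReal_mul hc1p]
          congr 1
          have e : n ^ (2 * ρ - 3) = n * n ^ (ρ - 2) * n ^ (ρ - 2) := by
            nth_rewrite 2 [← Real.rpow_one n]
            rw [← Real.rpow_add hn, ← Real.rpow_add hn]; congr 1; ring
          rw [e, hc1, show ρ - 3 + 1 = ρ - 2 by ring, div_eq_mul_one_div n 8,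
            Real.mul_rpow hn.le (by norm_num)]
          ring
      _ ≤ ENNReal.ofReal c1 * (ENNReal.ofReal c2 * R) := by gcongr
      _ = _ := by ring
  · apply hfar _ _ ENNReal.ofReal_ne_top
    intro b hb
    have hb' : n / 8 ≤ b := hb
    have hb0 : 0 < b := by linarith
    rw [← ENNReal.ofReal_mul (by positivity)]
    apply ENNReal.ofReal_le_ofReal
    have e : b ^ (2 * ρ - 5) = b ^ (ρ - 2) * b ^ (ρ - 3) := by
      rw [← Real.rpow_add hb0]; congr 1; ring
    rw [e, hc3, ← mul_assoc, ← Real.mul_rpow (by norm_num) hb0.le]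
    gcongr
    · linarith
    · linarith

section
variable {g : ℝ → ℂ}

lemma pu_meas (hg : Prof g) : Measurable (fun z : ℝ × ℝ => pu g z.2 z.1) := by
  have : Measurable (fun q : (ℝ × ℝ) × ℝ => ee (q.1.2 * q.2 + q.1.1 * q.2 ^ 2) * g q.2) :=
    Measurable.mul (by fun_prop) (hg.meas.comp measurable_snd)
  exact this.stronglyMeasurable.integral_prod_right'.measurable

lemma Ufar_meas (hg : Prof g) (δ : ℝ) : Measurable (fun z : ℝ × ℝ => Ufar g δ z.2 z.1) := by
  have h1 : Measurable (fun q : ((ℝ × ℝ) × ℝ) × ℝ =>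
      ee (q.1.1.1 * (2 * q.1.2 ^ 2 + 2 * q.2 ^ 2)) * kfar g δ q.1.2 q.2) :=
    Measurable.mul (by fun_prop) ((kfar_meas hg δ).comp
      (by fun_prop : Measurable (fun q : ((ℝ × ℝ) × ℝ) × ℝ => (q.1.2, q.2))))
  have h2 : Measurable (fun q : (ℝ × ℝ) × ℝ =>
      ∫ b, ee (q.1.1 * (2 * q.2 ^ 2 + 2 * b ^ 2)) * kfar g δ q.2 b) :=
    (h1.stronglyMeasurable.integral_prod_right' (ν := volume)).measurable
  have h3 : Measurable (fun q : (ℝ × ℝ) × ℝ => ee (q.1.2 * (2 * q.2)) *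
      ∫ b, ee (q.1.1 * (2 * q.2 ^ 2 + 2 * b ^ 2)) * kfar g δ q.2 b) :=
    Measurable.mul (by fun_prop) h2
  exact h3.stronglyMeasurable.integral_prod_right'.measurable

lemma level (hg : Prof g) (n : ℝ) (hn : 0 < n) (hN : ∫⁻ x, ‖g x‖ₑ ^ 2 = ENNReal.ofReal n)
    (t : ℝ) (ht : 0 < t) :
    (volume.prod volume) {z : ℝ × ℝ | t < ‖pu g z.2 z.1‖ ^ 2}
      ≤ (∫⁻ b in Set.Ioi (t / (16 * n)), Aut g b * ENNReal.ofReal (1 / b))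
        * ENNReal.ofReal (64 / t ^ 2) := by
  set δ := t / (16 * n) with hδ
  have hδp : 0 < δ := by positivity
  have hsub : {z : ℝ × ℝ | t < ‖pu g z.2 z.1‖ ^ 2} ⊆
      {z : ℝ × ℝ | ENNReal.ofReal (t ^ 2 / 64) ≤ ‖Ufar g δ z.2 z.1‖ₑ ^ 2} := by
    intro z hz
    simp only [Set.mem_ofPred_eq] at hz ⊢
    have h1 := usq_bound hg δ hδp z.2 z.1
    rw [hN, ← ENNReal.ofReal_mul hδp.le, ← ofReal_norm, ← ofReal_norm,
      ← ENNReal.ofReal_pow (by positivity), show (8:ℝ≥0∞) = ENNReal.ofReal 8 by simp,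
      show (4:ℝ≥0∞) = ENNReal.ofReal 4 by simp, ← ENNReal.ofReal_mul (by norm_num),
      ← ENNReal.ofReal_mul (by norm_num), ← ENNReal.ofReal_add (by positivity) (by positivity),
      ENNReal.ofReal_le_ofReal_iff (by positivity)] at h1
    have h2 : δ * n = t / 16 := by rw [hδ]; field_simp
    rw [← ofReal_norm, ← ENNReal.ofReal_pow (by positivity)]
    apply ENNReal.ofReal_le_ofReal
    have h3 : t / 8 ≤ ‖Ufar g δ z.2 z.1‖ := by rw [h2] at h1; linarith
    have : (t/8)^2 ≤ ‖Ufar g δ z.2 z.1‖ ^ 2 := by gcongr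
    linarith [this]
  refine (measure_mono hsub).trans ?_
  have hm : Measurable (fun z : ℝ × ℝ => ‖Ufar g δ z.2 z.1‖ₑ ^ 2) :=
    (Ufar_meas hg δ).enorm.pow_const 2
  refine (meas_ge_le_lintegral_div hm.aemeasurable (by simp; positivity)
    ENNReal.ofReal_ne_top).trans ?_
  rw [div_eq_mul_inv, ← ENNReal.ofReal_inv_of_pos (by positivity), inv_div]
  gcongr
  rw [lintegral_prod _ hm.aemeasurable]
  exact Ufar_L2 hg δ hδp

lemma zyg (ρ : ℝ) (h1 : 5 / 2 < ρ) (h2 : ρ < 3) : ∃ C : ℝ≥0∞, C ≠ ⊤ ∧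
    ∀ g : ℝ → ℂ, Prof g →
      ∫⁻ x3 : ℝ, ∫⁻ x1 : ℝ, ‖pu g x1 x3‖ₑ ^ (2 * ρ)
        ≤ C * ∫⁻ b in Set.Ioi 0, Aut g b * ENNReal.ofReal (b ^ (2 * ρ - 5)) := by
  obtain ⟨C, hC, hnum⟩ := numeric ρ h1 h2
  set c0 : ℝ := ρ * (64 * 16 ^ (ρ - 2) / (ρ - 2)) with hc0
  have hρ2 : 0 < ρ - 2 := by linarith
  have hρ0 : 0 < ρ := by linarith
  refine ⟨ENNReal.ofReal c0 * C, ENNReal.mul_ne_top ENNReal.ofReal_ne_top hC, ?_⟩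
  intro g hg
  by_cases hN0 : ∫⁻ x, ‖g x‖ₑ ^ 2 = 0
  · have : ∀ x1 x3, pu g x1 x3 = 0 := by
      intro x1 x3
      unfold pu
      rw [lintegral_eq_zero_iff (hg.meas.enorm.pow_const 2)] at hN0
      apply integral_eq_zero_of_ae
      filter_upwards [hN0] with x hx
      have : g x = 0 := by simpa using hx
      simp [this]
    simp [this, ENNReal.zero_rpow_of_pos (by linarith : 0 < 2 * ρ)]
  set n := (∫⁻ x, ‖g x‖ₑ ^ 2).toReal with hn
  have hNt : ∫⁻ x, ‖g x‖ₑ ^ 2 ≠ ⊤ := ne_top_of_le_ne_top ENNReal.one_ne_top hg.N_le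
  have hN : ∫⁻ x, ‖g x‖ₑ ^ 2 = ENNReal.ofReal n := (ENNReal.ofReal_toReal hNt).symm
  have hnp : 0 < n := ENNReal.toReal_pos hN0 hNt
  have hA := Aut_meas hg
  have key := hnum (Aut g) n hA hnp (fun b => by rw [← hN]; exact Aut_le hg b)
    (by rw [← hN]; exact Aut_total hg)
  have lay := lintegral_rpow_eq_lintegral_meas_lt_mul (volume.prod volume)
    (f := fun z : ℝ × ℝ => ‖pu g z.2 z.1‖ ^ 2) (by filter_upwards with z; positivity)
    ((pu_meas hg).norm.pow_const 2).aemeasurable hρ0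
  have e1 : ∫⁻ x3 : ℝ, ∫⁻ x1 : ℝ, ‖pu g x1 x3‖ₑ ^ (2 * ρ)
      = ∫⁻ z : ℝ × ℝ, ENNReal.ofReal ((‖pu g z.2 z.1‖ ^ 2) ^ ρ) ∂(volume.prod volume) := by
    rw [lintegral_prod]
    · congr 1; ext x3; congr 1; ext x1
      rw [← ENNReal.ofReal_rpow_of_nonneg (by positivity) (by linarith),
        ENNReal.ofReal_pow (by positivity), ofReal_norm, ENNReal.rpow_mul]
      norm_num
    · exact (((pu_meas hg).norm.pow_const 2).pow_const ρ).ennreal_ofReal.aemeasurable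
  rw [e1, lay]
  set G : ℝ → ℝ → ℝ≥0∞ := fun t b => if t < 16 * n * b then
    Aut g b * ENNReal.ofReal (1 / b) * ENNReal.ofReal (64 * t ^ (ρ - 3)) else 0 with hG
  have hGm : Measurable (Function.uncurry G) := by
    unfold Function.uncurry
    refine Measurable.ite (measurableSet_lt (by fun_prop) (by fun_prop)) ?_ measurable_const
    exact ((hA.comp measurable_snd).mul (by fun_prop)).mul (by fun_prop)
  have step1 : ∫⁻ t in Set.Ioi 0, (volume.prod volume) {z : ℝ × ℝ | t < ‖pu g z.2 z.1‖ ^ 2}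
      * ENNReal.ofReal (t ^ (ρ - 1)) ≤ ∫⁻ t in Set.Ioi 0, ∫⁻ b in Set.Ioi 0, G t b := by
    apply setLIntegral_mono' measurableSet_Ioi
    intro t ht
    have ht0 : 0 < t := ht
    calc _ ≤ ((∫⁻ b in Set.Ioi (t / (16 * n)), Aut g b * ENNReal.ofReal (1 / b))
        * ENNReal.ofReal (64 / t ^ 2)) * ENNReal.ofReal (t ^ (ρ - 1)) := by
          gcongr
          exact level hg n hnp hN t ht0
      _ = ∫⁻ b in Set.Ioi (t / (16 * n)), Aut g b * ENNReal.ofReal (1 / b) *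
          ENNReal.ofReal (64 * t ^ (ρ - 3)) := by
          rw [lintegral_mul_const' _ _ ENNReal.ofReal_ne_top, mul_assoc,
            ← ENNReal.ofReal_mul (by positivity)]
          congr 2
          have : t ^ (ρ - 1) = t ^ 2 * t ^ (ρ - 3) := by
            rw [← Real.rpow_natCast, ← Real.rpow_add ht0]; congr 1; push_cast; ring
          rw [this]; field_simp
      _ ≤ _ := by
          rw [← lintegral_indicator measurableSet_Ioi, ← lintegral_indicator measurableSet_Ioi]
          apply lintegral_mono
          intro b
          by_cases hb : t / (16 * n) < b
          · have hb0 : 0 < b := lt_trans (by positivity) hb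
            have hb2 : t < 16 * n * b := by
              rw [div_lt_iff₀ (by positivity)] at hb; linarith
            simp [Set.indicator, hb, hb0, hG, hb2]
          · simp [Set.indicator, hb]
  have step2 : ∫⁻ t in Set.Ioi 0, ∫⁻ b in Set.Ioi 0, G t b
      = ∫⁻ b in Set.Ioi 0, ∫⁻ t in Set.Ioi 0, G t b :=
    lintegral_lintegral_swap hGm.aemeasurable
  have step3 : ∫⁻ b in Set.Ioi 0, ∫⁻ t in Set.Ioi 0, G t b
      = ENNReal.ofReal (64 * 16 ^ (ρ - 2) / (ρ - 2)) *
        ∫⁻ b in Set.Ioi 0, Aut g b * ENNReal.ofReal (n ^ (ρ - 2) * b ^ (ρ - 3)) := by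
    rw [← lintegral_const_mul' _ _ ENNReal.ofReal_ne_top]
    apply setLIntegral_congr_fun measurableSet_Ioi
    intro b hb
    have hb0 : 0 < b := hb
    calc ∫⁻ t in Set.Ioi 0, G t b = ∫⁻ t in Set.Ioo 0 (16 * n * b),
          Aut g b * ENNReal.ofReal (1 / b) * ENNReal.ofReal 64 * ENNReal.ofReal (t ^ (ρ - 3)) := by
          rw [← lintegral_indicator measurableSet_Ioi, ← lintegral_indicator measurableSet_Ioo]
          congr 1; ext t
          by_cases ht : 0 < t
          · by_cases ht2 : t < 16 * n * b
            · simp only [Set.indicator, Set.mem_Ioi, ht, Set.mem_Ioo, ht2, hG, if_true, and_self]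
              rw [ENNReal.ofReal_mul (by norm_num), mul_assoc, mul_assoc, mul_assoc]
            · simp [Set.indicator, ht, ht2, hG]
          · simp [Set.indicator, ht]
      _ = Aut g b * ENNReal.ofReal (1 / b) * ENNReal.ofReal 64 *
          ENNReal.ofReal ((16 * n * b) ^ (ρ - 3 + 1) / (ρ - 3 + 1)) := by
          rw [lintegral_const_mul, lint_rpow _ _ (by linarith) (by positivity)]
          fun_prop
      _ = _ := by
          beta_reduce
          rw [mul_assoc, mul_assoc, mul_left_comm (ENNReal.ofReal _) (Aut g b)]
          congr 1
          rw [show ρ - 3 + 1 = ρ - 2 by ring, ← ENNReal.ofReal_mul (by norm_num),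
            ← ENNReal.ofReal_mul (by positivity), ← ENNReal.ofReal_mul (by positivity)]
          congr 1
          rw [Real.mul_rpow (by positivity) hb0.le, Real.mul_rpow (by norm_num) hnp.le]
          have : b ^ (ρ - 2) = b * b ^ (ρ - 3) := by
            nth_rewrite 2 [← Real.rpow_one b]
            rw [← Real.rpow_add hb0]; congr 1; ring
          rw [this]; field_simp
  calc _ ≤ ENNReal.ofReal ρ * (ENNReal.ofReal (64 * 16 ^ (ρ - 2) / (ρ - 2)) *
        (C * ∫⁻ b in Set.Ioi 0, Aut g b * ENNReal.ofReal (b ^ (2 * ρ - 5)))) := by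
        gcongr
        refine step1.trans ?_
        rw [step2, step3]
        gcongr
    _ = _ := by
        rw [hc0, ENNReal.ofReal_mul hρ0.le]; ring
end

/-- Measurable, bounded by one, supported in the unit square. -/
structure Prof2 (f : ℝ × ℝ → ℂ) : Prop where
  meas : Measurable f
  bdd : ∀ z, ‖f z‖ₑ ≤ 1
  supp : ∀ z, ¬ (z.1 ∈ Set.Icc (0:ℝ) 1 ∧ z.2 ∈ Set.Icc (0:ℝ) 1) → f z = 0

/-- The extension operator in coordinates. -/
noncomputable def ExO (f : ℝ × ℝ → ℂ) (x1 x2 x3 x4 : ℝ) : ℂ :=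
  ∫ z : ℝ × ℝ, ee (x1 * z.1 + x2 * z.2 + x3 * z.1 ^ 2 + x4 * (z.1 * z.2)) * f z

/-- Partial Fourier transform. -/
noncomputable def Ff (f : ℝ × ℝ → ℂ) (ξ t : ℝ) : ℂ := ∫ η, ee (t * η) * f (ξ, η)

section
variable {f : ℝ × ℝ → ℂ}

lemma Prof2.slice (hf : Prof2 f) (ξ : ℝ) : Prof (fun η => f (ξ, η)) where
  meas := hf.meas.comp (by fun_prop)
  bdd := fun x => hf.bdd _
  supp := fun x hx => hf.supp _ (fun h => hx h.2)

lemma Prof2.integrable (hf : Prof2 f) : Integrable f := by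
  have hs : MeasurableSet (Set.Icc (0:ℝ) 1 ×ˢ Set.Icc (0:ℝ) 1) := measurableSet_Icc.prod measurableSet_Icc
  have h1 : IntegrableOn f (Set.Icc (0:ℝ) 1 ×ˢ Set.Icc (0:ℝ) 1) := by
    apply Measure.integrableOn_of_bounded (M := 1)
    · rw [Measure.volume_eq_prod, Measure.prod_prod]; simp
    · exact hf.meas.aestronglyMeasurable
    · filter_upwards with z
      have := hf.bdd z
      rw [← ofReal_norm] at this
      exact ENNReal.ofReal_le_one.1 this
  rw [integrableOn_iff_integrable_of_support_subset] at h1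
  · exact h1
  · intro x hx
    by_contra h
    exact hx (hf.supp x h)

lemma Ff_meas (hf : Prof2 f) : Measurable (fun z : ℝ × ℝ => Ff f z.1 z.2) := by
  have : Measurable (fun q : (ℝ × ℝ) × ℝ => ee (q.1.2 * q.2) * f (q.1.1, q.2)) :=
    Measurable.mul (by fun_prop) (hf.meas.comp (by fun_prop))
  exact (this.stronglyMeasurable.integral_prod_right' (ν := volume)).measurable

lemma Ff_meas' (hf : Prof2 f) {α : Type*} [MeasurableSpace α] {u v : α → ℝ} (hu : Measurable u)
    (hv : Measurable v) : Measurable (fun z => Ff f (u z) (v z)) := by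
  have := (Ff_meas hf).comp (hu.prodMk hv)
  simpa only [Function.comp_def] using this

lemma Ff_zero (hf : Prof2 f) (ξ t : ℝ) (h : ξ ∉ Set.Icc (0:ℝ) 1) : Ff f ξ t = 0 := by
  unfold Ff
  have : ∀ η, f (ξ, η) = 0 := fun η => hf.supp _ (fun h' => h h'.1)
  simp [this]

lemma prof_one {g : ℝ → ℂ} (hg : Prof g) : ∫⁻ x, ‖g x‖ₑ ≤ 1 := by
  calc ∫⁻ x, ‖g x‖ₑ ≤ ∫⁻ x, (Set.Icc (0:ℝ) 1).indicator (fun _ => 1) x := by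
        apply lintegral_mono
        intro x
        by_cases hx : x ∈ Set.Icc (0:ℝ) 1
        · rw [Set.indicator_of_mem hx]; exact hg.bdd x
        · rw [Set.indicator_of_notMem hx]; simp [hg.supp x hx]
    _ = 1 := by rw [lintegral_indicator measurableSet_Icc]; simp

lemma Ff_bdd (hf : Prof2 f) (ξ t : ℝ) : ‖Ff f ξ t‖ₑ ≤ 1 := by
  unfold Ff
  refine (enorm_integral_le_lintegral_enorm _).trans ?_
  simp only [enorm_mul, enorm_ee, one_mul]
  exact prof_one (hf.slice ξ)

lemma Ff_prof (hf : Prof2 f) (x2 x4 : ℝ) : Prof (fun ξ => Ff f ξ (x2 + x4 * ξ)) := by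
  constructor
  · exact Ff_meas' hf (by fun_prop) (by fun_prop)
  · intro x
    exact Ff_bdd hf _ _
  · intro x hx
    exact Ff_zero hf _ _ hx

lemma int_ee_meas {α : Type*} [MeasurableSpace α] {μ : Measure α} {k : α → ℂ} (hk : Integrable k μ)
    {φ : α → ℝ} (hφ : Measurable φ) : Integrable (fun x => ee (φ x) * k x) μ := by
  refine hk.bdd_mul (c := 1) (measurable_ee.comp hφ).aestronglyMeasurable ?_
  filter_upwards with x
  simp [norm_ee]

lemma ExO_eq_pu (hf : Prof2 f) (x1 x2 x3 x4 : ℝ) :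
    ExO f x1 x2 x3 x4 = pu (fun ξ => Ff f ξ (x2 + x4 * ξ)) x1 x3 := by
  unfold ExO pu Ff
  have hi := int_ee_meas hf.integrable (φ := fun z : ℝ × ℝ =>
    x1 * z.1 + x2 * z.2 + x3 * z.1 ^ 2 + x4 * (z.1 * z.2)) (by fun_prop)
  rw [Measure.volume_eq_prod] at hi ⊢
  rw [integral_prod _ hi]
  congr 1; ext ξ
  rw [← integral_const_mul]
  congr 1; ext η
  rw [← mul_assoc (ee _), ← ee_add]
  congr 2
  ring

lemma H_le (hf : Prof2 f) (ξ : ℝ) : ∫⁻ t, ‖Ff f ξ t‖ₑ ^ 2 ≤ ∫⁻ η, ‖f (ξ, η)‖ₑ ^ 2 :=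
  plancherel _ (hf.slice ξ).integrable

lemma two_lines (P R : ℝ → ℝ≥0∞) (hP : Measurable P) (hR : Measurable R) (a b : ℝ) (hb : 0 < b) :
    ∫⁻ x4 : ℝ, ∫⁻ x2 : ℝ, P (x2 + x4 * (a + b)) * R (x2 + x4 * (a - b))
      = ENNReal.ofReal (1 / (2 * b)) * ((∫⁻ t, P t) * ∫⁻ t, R t) := by
  have e1 : ∀ x4 : ℝ, ∫⁻ x2 : ℝ, P (x2 + x4 * (a + b)) * R (x2 + x4 * (a - b))
      = ∫⁻ x2 : ℝ, P (x2 + (2 * b) * x4) * R x2 := by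
    intro x4
    rw [← lintegral_add_right_eq_self (fun x2 => P (x2 + (2 * b) * x4) * R x2) (x4 * (a - b))]
    congr 1; ext x2
    congr 2; ring
  simp_rw [e1]
  rw [lintegral_lintegral_swap]
  · have e2 : ∀ x2 : ℝ, ∫⁻ x4 : ℝ, P (x2 + (2 * b) * x4) * R x2
        = (ENNReal.ofReal (1 / (2 * b)) * ∫⁻ t, P t) * R x2 := by
      intro x2
      rw [lintegral_mul_const _ (by fun_prop),
        lint_scale (2 * b) (by positivity) (fun y => P (x2 + y)),
        lintegral_add_left_eq_self, abs_of_pos (by positivity), one_div]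
    simp_rw [e2]
    rw [lintegral_const_mul _ hR, mul_assoc]
  · exact ((hP.comp (by fun_prop : Measurable (fun z : ℝ × ℝ => z.2 + 2 * b * z.1))).mul
      (hR.comp measurable_snd)).aemeasurable

attribute [irreducible] Ff

/-- The integrand in the four dimensional estimate. -/
noncomputable def Phi (f : ℝ × ℝ → ℂ) (ρ : ℝ) (y z : ℝ × ℝ) : ℝ≥0∞ :=
  ‖Ff f (z.2 + z.1) (y.2 + y.1 * (z.2 + z.1))‖ₑ ^ 2 *
    ‖Ff f (z.2 - z.1) (y.2 + y.1 * (z.2 - z.1))‖ₑ ^ 2 * ENNReal.ofReal (z.1 ^ (2 * ρ - 5))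

lemma Phi_eq (f : ℝ × ℝ → ℂ) (ρ : ℝ) (y z : ℝ × ℝ) : Phi f ρ y z =
  ‖Ff f (z.2 + z.1) (y.2 + y.1 * (z.2 + z.1))‖ₑ ^ 2 *
    ‖Ff f (z.2 - z.1) (y.2 + y.1 * (z.2 - z.1))‖ₑ ^ 2 * ENNReal.ofReal (z.1 ^ (2 * ρ - 5)) := rfl

lemma Phi_meas (hf : Prof2 f) (ρ : ℝ) :
    Measurable (fun w : (ℝ × ℝ) × (ℝ × ℝ) => Phi f ρ w.1 w.2) := by
  unfold Phi
  have i1 : Measurable (fun p : (ℝ × ℝ) × ℝ × ℝ => Ff f (p.2.2 + p.2.1) (p.1.2 + p.1.1 * (p.2.2 + p.2.1))) :=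
    Ff_meas' hf (by fun_prop) (by fun_prop)
  have i2 : Measurable (fun p : (ℝ × ℝ) × ℝ × ℝ => Ff f (p.2.2 - p.2.1) (p.1.2 + p.1.1 * (p.2.2 - p.2.1))) :=
    Ff_meas' hf (by fun_prop) (by fun_prop)
  exact ((i1.enorm.pow_const 2).mul (i2.enorm.pow_const 2)).mul (by fun_prop)

attribute [irreducible] Phi

lemma key4 (ρ : ℝ) (h1 : 5 / 2 < ρ) (h2 : ρ < 3) : ∃ C : ℝ≥0∞, C ≠ ⊤ ∧
    ∀ f : ℝ × ℝ → ℂ, Prof2 f →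
      ∫⁻ x4 : ℝ, ∫⁻ x2 : ℝ, ∫⁻ x3 : ℝ, ∫⁻ x1 : ℝ, ‖ExO f x1 x2 x3 x4‖ₑ ^ (2 * ρ)
        ≤ C * ∫⁻ z, ‖f z‖ₑ ^ 2 := by
  obtain ⟨C, hC, hz⟩ := zyg ρ h1 h2
  refine ⟨C * ENNReal.ofReal (1 / (2 * ρ - 5)), ENNReal.mul_ne_top hC ENNReal.ofReal_ne_top, ?_⟩
  intro f hf
  set Φ := Phi f ρ with hΦ0
  have hΦ : ∀ y z, Φ y z = _ := fun y z => Phi_eq f ρ y z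
  set ν : Measure (ℝ × ℝ) := (volume.restrict (Set.Ioi (0:ℝ))).prod volume with hν
  have hΦm : Measurable (fun w : (ℝ × ℝ) × (ℝ × ℝ) => Φ w.1 w.2) := Phi_meas hf ρ
  have hΦm1 : ∀ z, Measurable (fun y => Φ y z) := fun z => by
    have := hΦm.comp (measurable_id.prodMk (measurable_const (a := z)))
    simpa only [Function.comp_def, id] using this
  have hΦm2 : ∀ y, Measurable (fun z => Φ y z) := fun y => by
    have := hΦm.comp ((measurable_const (a := y)).prodMk measurable_id)
    simpa only [Function.comp_def, id] using this
  have s1 : ∀ x4 x2 : ℝ, ∫⁻ x3 : ℝ, ∫⁻ x1 : ℝ, ‖ExO f x1 x2 x3 x4‖ₑ ^ (2 * ρ)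
      ≤ C * ∫⁻ z, Φ (x4, x2) z ∂ν := by
    intro x4 x2
    simp_rw [ExO_eq_pu hf]
    refine (hz _ (Ff_prof hf x2 x4)).trans (le_of_eq ?_)
    congr 1
    rw [hν, lintegral_prod _ (hΦm2 (x4, x2)).aemeasurable]
    congr 1; ext b
    rw [Aut, ← lintegral_mul_const' _ _ ENNReal.ofReal_ne_top]
    simp only [hΦ]
  have s2 : ∫⁻ x4 : ℝ, ∫⁻ x2 : ℝ, (∫⁻ z, Φ (x4, x2) z ∂ν) = ∫⁻ z, (∫⁻ x4 : ℝ, ∫⁻ x2 : ℝ, Φ (x4, x2) z) ∂ν := by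
    have t1 : ∫⁻ x4 : ℝ, ∫⁻ x2 : ℝ, (∫⁻ z, Φ (x4, x2) z ∂ν) = ∫⁻ y, ∫⁻ z, Φ y z ∂ν ∂(volume.prod volume) := by
      rw [lintegral_prod]
      exact (Measurable.lintegral_prod_right' (ν := ν) hΦm).aemeasurable
    rw [t1, lintegral_lintegral_swap hΦm.aemeasurable]
    congr 1; ext z
    rw [lintegral_prod]
    exact (hΦm1 z).aemeasurable
  set h : ℝ → ℝ≥0∞ := fun ξ => ∫⁻ η, ‖f (ξ, η)‖ₑ ^ 2 with hh
  have hhm : Measurable h := (Measurable.lintegral_prod_right' (ν := volume) (hf.meas.enorm.pow_const 2))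
  have hh1 : ∀ ξ, h ξ ≤ 1 := fun ξ => (hf.slice ξ).N_le
  have hh0 : ∀ ξ, ξ ∉ Set.Icc (0:ℝ) 1 → h ξ = 0 := by
    intro ξ hξ
    have : ∀ η, f (ξ, η) = 0 := fun η => hf.supp _ (fun h' => hξ h'.1)
    simp [hh, this]
  have s3 : ∀ b : ℝ, 0 < b → ∀ a : ℝ, ∫⁻ x4 : ℝ, ∫⁻ x2 : ℝ, Φ (x4, x2) (b, a)
      ≤ (Set.Ioo (0:ℝ) 1).indicator (fun b => ENNReal.ofReal (b ^ (2 * ρ - 6))) b * h (a + b) := by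
    intro b hb a
    have t1 : ∫⁻ x4 : ℝ, ∫⁻ x2 : ℝ, Φ (x4, x2) (b, a) =
        (ENNReal.ofReal (1 / (2 * b)) * ((∫⁻ t, ‖Ff f (a + b) t‖ₑ ^ 2) * ∫⁻ t, ‖Ff f (a - b) t‖ₑ ^ 2))
          * ENNReal.ofReal (b ^ (2 * ρ - 5)) := by
      rw [← two_lines _ _ _ _ a b hb]
      · simp only [hΦ]
        simp_rw [lintegral_mul_const' _ _ (ENNReal.ofReal_ne_top (r := b ^ (2 * ρ - 5)))]
      · exact (Ff_meas' hf measurable_const measurable_id).enorm.pow_const 2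
      · exact (Ff_meas' hf measurable_const measurable_id).enorm.pow_const 2
    rw [t1]
    by_cases hb1 : b < 1
    · rw [Set.indicator_of_mem (show b ∈ Set.Ioo (0:ℝ) 1 from ⟨hb, hb1⟩)]
      calc _ ≤ (ENNReal.ofReal (1 / (2 * b)) * (h (a + b) * 1)) * ENNReal.ofReal (b ^ (2 * ρ - 5)) := by
            gcongr
            · exact H_le hf _
            · exact (H_le hf _).trans (hh1 _)
        _ = (ENNReal.ofReal (1 / (2 * b)) * ENNReal.ofReal (b ^ (2 * ρ - 5))) * h (a + b) := by ring
        _ ≤ _ := by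
            gcongr
            rw [← ENNReal.ofReal_mul (by positivity)]
            apply ENNReal.ofReal_le_ofReal
            have : b ^ (2 * ρ - 5) = b * b ^ (2 * ρ - 6) := by
              nth_rewrite 2 [← Real.rpow_one b]
              rw [← Real.rpow_add hb]; congr 1; ring
            rw [this]
            have h0 : 0 ≤ b ^ (2 * ρ - 6) := by positivity
            field_simp
            linarith
    · have : (∫⁻ t, ‖Ff f (a + b) t‖ₑ ^ 2) * ∫⁻ t, ‖Ff f (a - b) t‖ₑ ^ 2 = 0 := by
        rw [mul_eq_zero]
        by_cases ha : a + b ∈ Set.Icc (0:ℝ) 1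
        · right
          have : a - b ∉ Set.Icc (0:ℝ) 1 := by
            intro h'
            have := ha.2
            have := h'.1
            linarith
          simp [Ff_zero hf _ _ this]
        · left
          simp [Ff_zero hf _ _ ha]
      simp [this]
  calc _ ≤ ∫⁻ x4 : ℝ, ∫⁻ x2 : ℝ, C * ∫⁻ z, Φ (x4, x2) z ∂ν :=
        lintegral_mono (fun x4 => lintegral_mono (fun x2 => s1 x4 x2))
    _ = C * ∫⁻ z, (∫⁻ x4 : ℝ, ∫⁻ x2 : ℝ, Φ (x4, x2) z) ∂ν := by
        rw [← s2]
        simp_rw [lintegral_const_mul' _ _ hC]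
    _ = C * ∫⁻ b in Set.Ioi 0, ∫⁻ a, ∫⁻ x4 : ℝ, ∫⁻ x2 : ℝ, Φ (x4, x2) (b, a) := by
        rw [hν, lintegral_prod]
        apply Measurable.aemeasurable
        have m1 : Measurable (fun q : (ℝ × ℝ) × (ℝ × ℝ) => Φ q.2 q.1) := hΦm.comp measurable_swap
        have m2 := Measurable.lintegral_prod_right' (ν := volume) m1
        convert m2 using 1
        ext z
        rw [Measure.volume_eq_prod, lintegral_prod]
        exact (hΦm1 z).aemeasurable
    _ ≤ C * ∫⁻ b in Set.Ioi 0, ∫⁻ a, (Set.Ioo (0:ℝ) 1).indicator (fun b => ENNReal.ofReal (b ^ (2 * ρ - 6))) b * h (a + b) := by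
        gcongr 1
        apply setLIntegral_mono' measurableSet_Ioi
        intro b hb
        exact lintegral_mono (fun a => s3 b hb a)
    _ = C * ∫⁻ b in Set.Ioi 0, (Set.Ioo (0:ℝ) 1).indicator (fun b => ENNReal.ofReal (b ^ (2 * ρ - 6))) b * ∫⁻ a, h a := by
        congr 2; ext b
        rw [lintegral_const_mul _ (by fun_prop), lintegral_add_right_eq_self]
    _ = C * (ENNReal.ofReal (1 / (2 * ρ - 5)) * ∫⁻ a, h a) := by
        congr 1
        rw [lintegral_mul_const _ (Measurable.indicator (by fun_prop) measurableSet_Ioo)]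
        congr 1
        rw [setLIntegral_indicator measurableSet_Ioo, Set.inter_eq_left.mpr (fun x hx => hx.1),
          lint_rpow _ _ (by linarith) zero_le_one]
        congr 1
        rw [Real.one_rpow]; congr 1; ring
    _ = _ := by
        rw [Measure.volume_eq_prod, lintegral_prod _ (hf.meas.enorm.pow_const 2).aemeasurable, mul_assoc]
end

/-- The pair of quadratic forms. -/
noncomputable abbrev Qf : (Fin 2 → ℝ) → Fin 2 → ℝ := fun ξ j => if j = 0 then ξ 0 ^ 2 else ξ 0 * ξ 1

/-- The phase function. -/
noncomputable def ph (x : Fin (2 + 2) → ℝ) (ξ : Fin 2 → ℝ) : ℝ :=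
  x 0 * ξ 0 + x 1 * ξ 1 + x 2 * ξ 0 ^ 2 + x 3 * (ξ 0 * ξ 1)

/-- Normalized Lebesgue measure on the unit square. -/
noncomputable def mu : Measure (Fin 2 → ℝ) := volume.restrict (Set.Icc 0 1)

instance : IsProbabilityMeasure mu := by
  constructor
  unfold mu
  simp [Real.volume_Icc_pi]

/-- The operator in a convenient form. -/
noncomputable def TT (f : (Fin 2 → ℝ) → ℂ) (x : Fin (2 + 2) → ℝ) : ℂ :=
  ∫ ξ, ee (ph x ξ) * f ξ ∂mu

lemma extOp_eq (f : (Fin 2 → ℝ) → ℂ) : extOp 2 2 Qf f = TT f := by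
  ext x
  unfold extOp TT mu
  congr 1; ext ξ
  have : ((∑ i : Fin 2, x (Fin.castAdd 2 i) * ξ i) +
        ∑ j : Fin 2, x (Fin.natAdd 2 j) * Qf ξ j : ℝ) = ph x ξ := by
    simp only [Fin.sum_univ_two, Qf, ph, if_true, one_ne_zero, if_false]
    rw [← add_assoc]
    rfl
  rw [this]
  rfl

lemma ph_meas : Measurable (fun z : (Fin (2 + 2) → ℝ) × (Fin 2 → ℝ) => ph z.1 z.2) := by
  unfold ph; fun_prop

lemma ph_meas' (x : Fin (2 + 2) → ℝ) : Measurable (ph x) := by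
  unfold ph; fun_prop

lemma TT_meas {f : (Fin 2 → ℝ) → ℂ} (hf : Measurable f) : Measurable (TT f) := by
  have : Measurable (fun z : (Fin (2 + 2) → ℝ) × (Fin 2 → ℝ) => ee (ph z.1 z.2) * f z.2) :=
    (measurable_ee.comp ph_meas).mul (hf.comp measurable_snd)
  exact (this.stronglyMeasurable.integral_prod_right' (ν := mu)).measurable

lemma TT_sup (f : (Fin 2 → ℝ) → ℂ) (x : Fin (2 + 2) → ℝ) : ‖TT f x‖ₑ ≤ ∫⁻ ξ, ‖f ξ‖ₑ ∂mu := by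
  unfold TT
  refine (enorm_integral_le_lintegral_enorm _).trans ?_
  simp [enorm_mul, enorm_ee]

lemma lint4 (F : (Fin (2 + 2) → ℝ) → ℝ≥0∞) (hF : Measurable F) :
    ∫⁻ x, F x = ∫⁻ x3 : ℝ, ∫⁻ x1 : ℝ, ∫⁻ x2 : ℝ, ∫⁻ x0 : ℝ, F ![x0, x1, x2, x3] := by
  have h := (volume_preserving_piFinSuccAbove (fun _ : Fin 4 => ℝ) 3).symm
  have h' := (volume_preserving_piFinSuccAbove (fun _ : Fin 3 => ℝ) 1).symm
  have h'' := (volume_preserving_piFinSuccAbove (fun _ : Fin 2 => ℝ) 1).symm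
  rw [← h.lintegral_comp hF, Measure.volume_eq_prod, lintegral_prod _ (by
    exact (hF.comp (MeasurableEquiv.measurable _)).aemeasurable)]
  congr 1; ext x3
  have hF1 : Measurable (fun y => F ((MeasurableEquiv.piFinSuccAbove (fun x => ℝ) 3).symm (x3, y))) :=
    hF.comp ((MeasurableEquiv.measurable _).comp (by fun_prop))
  rw [← h'.lintegral_comp hF1, Measure.volume_eq_prod, lintegral_prod _ (by
    exact (hF1.comp (MeasurableEquiv.measurable _)).aemeasurable)]
  congr 1; ext x1
  have hF2 : Measurable (fun y => F ((MeasurableEquiv.piFinSuccAbove (fun x => ℝ) 3).symm (x3,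
      ((MeasurableEquiv.piFinSuccAbove (fun x => ℝ) 1).symm (x1, y))))) :=
    hF1.comp ((MeasurableEquiv.measurable _).comp (by fun_prop))
  rw [← h''.lintegral_comp hF2, Measure.volume_eq_prod, lintegral_prod _ (by
    exact (hF2.comp (MeasurableEquiv.measurable _)).aemeasurable)]
  congr 1; ext x2
  have h3 := (volume_preserving_funUnique (Fin 1) ℝ).symm
  have hF3 : Measurable (fun y => F ((MeasurableEquiv.piFinSuccAbove (fun x => ℝ) 3).symm (x3,
      ((MeasurableEquiv.piFinSuccAbove (fun x => ℝ) 1).symm (x1,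
      ((MeasurableEquiv.piFinSuccAbove (fun x => ℝ) 1).symm (x2, y))))))) :=
    hF2.comp ((MeasurableEquiv.measurable _).comp (by fun_prop))
  refine (h3.lintegral_comp hF3).symm.trans ?_
  congr 1; ext x0
  congr 1
  ext i
  fin_cases i <;> rfl
 
lemma int2 (F : (Fin 2 → ℝ) → ℂ) : ∫ ξ, F ξ = ∫ z : ℝ × ℝ, F ![z.1, z.2] := by
  rw [← (volume_preserving_finTwoArrow ℝ).symm.integral_comp (MeasurableEquiv.measurableEmbedding _)]
  rfl

lemma lint2 (F : (Fin 2 → ℝ) → ℝ≥0∞) : ∫⁻ ξ, F ξ = ∫⁻ z : ℝ × ℝ, F ![z.1, z.2] := by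
  rw [← (volume_preserving_finTwoArrow ℝ).symm.lintegral_comp_emb (MeasurableEquiv.measurableEmbedding _)]
  rfl

/-- Pull a function back to the plane. -/
noncomputable def pb (f : (Fin 2 → ℝ) → ℂ) (z : ℝ × ℝ) : ℂ :=
  (Set.Icc (0 : Fin 2 → ℝ) 1).indicator f ![z.1, z.2]

lemma TT_eq_ExO (f : (Fin 2 → ℝ) → ℂ) (x : Fin (2 + 2) → ℝ) :
    TT f x = ExO (pb f) (x 0) (x 1) (x 2) (x 3) := by
  unfold TT ExO mu
  rw [← integral_indicator measurableSet_Icc, int2]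
  congr 1; ext z
  unfold pb
  by_cases hz : ![z.1, z.2] ∈ Set.Icc (0 : Fin 2 → ℝ) 1
  · rw [Set.indicator_of_mem hz, Set.indicator_of_mem hz]; rfl
  · rw [Set.indicator_of_notMem hz, Set.indicator_of_notMem hz, mul_zero]

lemma pb_meas {f : (Fin 2 → ℝ) → ℂ} (hf : Measurable f) : Measurable (pb f) := by
  unfold pb
  have h : Measurable (fun z : ℝ × ℝ => (![z.1, z.2] : Fin 2 → ℝ)) :=
    (MeasurableEquiv.finTwoArrow (α := ℝ)).symm.measurable
  exact (hf.indicator measurableSet_Icc).comp h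

lemma pb_prof {f : (Fin 2 → ℝ) → ℂ} (hf : Measurable f) (hb : ∀ ξ, ‖f ξ‖ₑ ≤ 1) : Prof2 (pb f) where
  meas := pb_meas hf
  bdd := fun z => by
    unfold pb
    by_cases hz : ![z.1, z.2] ∈ Set.Icc (0 : Fin 2 → ℝ) 1
    · rw [Set.indicator_of_mem hz]; exact hb _
    · rw [Set.indicator_of_notMem hz]; simp
  supp := fun z hz => by
    unfold pb
    apply Set.indicator_of_notMem
    intro h
    apply hz
    have h1 := h.1
    have h2 := h.2
    rw [Pi.le_def] at h1 h2
    exact ⟨⟨h1 0, h2 0⟩, ⟨h1 1, h2 1⟩⟩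

lemma base (q1 : ℝ) (h1 : 5 < q1) (h2 : q1 < 6) : ∃ C : ℝ≥0∞, C ≠ ⊤ ∧
    ∀ f : (Fin 2 → ℝ) → ℂ, Measurable f → (∀ ξ, ‖f ξ‖ₑ ≤ 1) →
      ∫⁻ x, ‖TT f x‖ₑ ^ q1 ≤ C * ∫⁻ ξ, ‖f ξ‖ₑ ^ 2 ∂mu := by
  obtain ⟨C, hC, h⟩ := key4 (q1 / 2) (by linarith) (by linarith)
  refine ⟨C, hC, fun f hf hb => ?_⟩
  have := h _ (pb_prof hf hb)
  rw [lint4 _ ((TT_meas hf).enorm.pow_const q1)]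
  simp_rw [TT_eq_ExO]
  convert this using 2
  · simp only [mul_div_cancel₀ q1 (two_ne_zero' ℝ)]
    rfl
  · unfold mu
    rw [← lintegral_indicator measurableSet_Icc, lint2]
    congr 1; ext z
    unfold pb
    by_cases hz : ![z.1, z.2] ∈ Set.Icc (0 : Fin 2 → ℝ) 1
    · rw [Set.indicator_of_mem hz, Set.indicator_of_mem hz]
    · rw [Set.indicator_of_notMem hz, Set.indicator_of_notMem hz]; simp

lemma TT_integrable {f : (Fin 2 → ℝ) → ℂ} (hf : Integrable f mu) (x : Fin (2 + 2) → ℝ) :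
    Integrable (fun ξ => ee (ph x ξ) * f ξ) mu := int_ee_meas hf (ph_meas' x)

lemma TT_add {f g : (Fin 2 → ℝ) → ℂ} (hf : Integrable f mu) (hg : Integrable g mu) :
    TT (f + g) = TT f + TT g := by
  ext x
  simp only [TT, Pi.add_apply, mul_add]
  exact integral_add (TT_integrable hf x) (TT_integrable hg x)

lemma TT_smul (c : ℂ) (f : (Fin 2 → ℝ) → ℂ) : TT (c • f) = c • TT f := by
  ext x
  simp only [TT, Pi.smul_apply, smul_eq_mul]
  rw [← integral_const_mul]
  congr 1; ext ξ; ring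

lemma lint_supp {f : (Fin 2 → ℝ) → ℂ} (hf : Measurable f) (hb : ∀ ξ, ‖f ξ‖ₑ ≤ 1) (n : ℕ) (hn : n ≠ 0) :
    ∫⁻ ξ, ‖f ξ‖ₑ ^ n ∂mu ≤ mu (Function.support f) := by
  have hs : MeasurableSet (Function.support f) := measurableSet_support hf
  rw [← lintegral_indicator_one hs]
  apply lintegral_mono
  intro ξ
  by_cases h : ξ ∈ Function.support f
  · rw [Set.indicator_of_mem h]
    exact pow_le_one' (hb ξ) n
  · rw [Set.indicator_of_notMem h]
    have : f ξ = 0 := by simpa using h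
    simp [this, hn]

lemma level_est (q1 q : ℝ) (h5 : 5 < q1) (h6 : q1 < 6) (hq : q1 ≤ q) : ∃ C : ℝ≥0∞, C ≠ ⊤ ∧
    ∀ (M : ℝ) (_ : 0 < M) (f : (Fin 2 → ℝ) → ℂ) (_ : Measurable f)
      (_ : ∀ ξ, ‖f ξ‖ₑ ≤ ENNReal.ofReal M) (a : ℝ≥0∞) (_ : mu (Function.support f) ≤ a),
      ∫⁻ x, ‖TT f x‖ₑ ^ q ≤ C * (ENNReal.ofReal M) ^ q * a ^ (q - q1 + 1) := by
  obtain ⟨C, hC, h⟩ := base q1 h5 h6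
  refine ⟨C, hC, fun M hM f hf hb a ha => ?_⟩
  set g : (Fin 2 → ℝ) → ℂ := ((M⁻¹ : ℝ) : ℂ) • f with hg
  have hgm : Measurable g := hf.const_smul _
  have hM0 : ENNReal.ofReal M ≠ 0 := by simpa using hM
  have hgb : ∀ ξ, ‖g ξ‖ₑ ≤ 1 := by
    intro ξ
    simp only [hg, Pi.smul_apply, smul_eq_mul, enorm_mul]
    calc _ ≤ ‖((M⁻¹ : ℝ) : ℂ)‖ₑ * ENNReal.ofReal M := by gcongr; exact hb ξ
      _ = 1 := by
        rw [← ofReal_norm, Complex.norm_real, Real.norm_of_nonneg (by positivity),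
          ← ENNReal.ofReal_mul (by positivity), inv_mul_cancel₀ hM.ne', ENNReal.ofReal_one]
  have hfg : f = (M : ℂ) • g := by
    rw [hg, smul_smul, ← Complex.ofReal_mul, mul_inv_cancel₀ hM.ne']; simp
  have hsupp : mu (Function.support g) ≤ a := by
    refine (measure_mono ?_).trans ha
    intro ξ hξ h0
    apply hξ
    simp [hg, h0]
  have hTf : ∀ x, ‖TT f x‖ₑ = ENNReal.ofReal M * ‖TT g x‖ₑ := by
    intro x
    rw [hfg, TT_smul, Pi.smul_apply, enorm_smul, ← ofReal_norm, Complex.norm_real,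
      Real.norm_of_nonneg hM.le]
  have hsup : ∀ x, ‖TT g x‖ₑ ≤ a := by
    intro x
    refine (TT_sup g x).trans (le_trans ?_ hsupp)
    simpa using lint_supp hgm hgb 1 one_ne_zero
  calc ∫⁻ x, ‖TT f x‖ₑ ^ q ≤ ∫⁻ x, ENNReal.ofReal M ^ q * a ^ (q - q1) * ‖TT g x‖ₑ ^ q1 := by
        apply lintegral_mono
        intro x
        simp only
        rw [hTf, ENNReal.mul_rpow_of_nonneg _ _ (by linarith), mul_assoc]
        gcongr
        calc ‖TT g x‖ₑ ^ q = ‖TT g x‖ₑ ^ (q - q1) * ‖TT g x‖ₑ ^ q1 := by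
              rw [← ENNReal.rpow_add_of_nonneg _ _ (by linarith) (by linarith)]; congr 1; ring
          _ ≤ _ := by
              gcongr
              exact hsup x
    _ = ENNReal.ofReal M ^ q * a ^ (q - q1) * ∫⁻ x, ‖TT g x‖ₑ ^ q1 :=
        lintegral_const_mul _ ((TT_meas hgm).enorm.pow_const q1)
    _ ≤ ENNReal.ofReal M ^ q * a ^ (q - q1) * (C * a) := by
        gcongr
        refine (h g hgm hgb).trans ?_
        gcongr
        exact (lint_supp hgm hgb 2 two_ne_zero).trans hsupp
    _ = _ := by
        rw [ENNReal.rpow_add_of_nonneg _ _ (by linarith) zero_le_one, ENNReal.rpow_one]; ring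

lemma level_norm (q1 : ℝ) (q : ℝ≥0∞) (h5 : 5 < q1) (h6 : q1 < 6) (hqt : q ≠ ⊤) (hq : q1 ≤ q.toReal) :
    ∃ B : ℝ≥0∞, B ≠ ⊤ ∧
    ∀ (M : ℝ) (_ : 0 < M) (f : (Fin 2 → ℝ) → ℂ) (_ : Measurable f)
      (_ : ∀ ξ, ‖f ξ‖ₑ ≤ ENNReal.ofReal M) (a : ℝ≥0∞) (_ : mu (Function.support f) ≤ a),
      eLpNorm (TT f) q volume ≤ B * ENNReal.ofReal M * a ^ ((q.toReal - q1 + 1) / q.toReal) := by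
  obtain ⟨C, hC, h⟩ := level_est q1 q.toReal h5 h6 hq
  have hQ : 0 < q.toReal := by linarith
  have hq0 : q ≠ 0 := by rintro rfl; simp at hQ
  refine ⟨C ^ (1 / q.toReal), ENNReal.rpow_ne_top_of_nonneg (by positivity) hC, fun M hM f hf hb a ha => ?_⟩
  rw [eLpNorm_eq_lintegral_rpow_enorm_toReal hq0 hqt]
  calc _ ≤ (C * (ENNReal.ofReal M) ^ q.toReal * a ^ (q.toReal - q1 + 1)) ^ (1 / q.toReal) := by
        gcongr
        exact h M hM f hf hb a ha
    _ = _ := by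
        rw [ENNReal.mul_rpow_of_nonneg _ _ (by positivity), ENNReal.mul_rpow_of_nonneg _ _ (by positivity),
          ← ENNReal.rpow_mul, ← ENNReal.rpow_mul, mul_one_div_cancel hQ.ne', ENNReal.rpow_one, mul_one_div]

/-- Truncation of a function at height `2 ^ k`. -/
noncomputable def trunc (f : (Fin 2 → ℝ) → ℂ) (k : ℕ) (ξ : Fin 2 → ℝ) : ℂ :=
  if ‖f ξ‖ ≤ 2 ^ k then f ξ else 0

lemma trunc_meas {f : (Fin 2 → ℝ) → ℂ} (hf : Measurable f) (k : ℕ) : Measurable (trunc f k) :=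
  Measurable.ite (measurableSet_le hf.norm measurable_const) hf measurable_const

lemma trunc_le (f : (Fin 2 → ℝ) → ℂ) (k : ℕ) (ξ : Fin 2 → ℝ) : ‖trunc f k ξ‖ ≤ ‖f ξ‖ := by
  unfold trunc; split_ifs <;> simp

lemma trunc_le' (f : (Fin 2 → ℝ) → ℂ) (k : ℕ) (ξ : Fin 2 → ℝ) : ‖trunc f k ξ‖ ≤ 2 ^ k := by
  unfold trunc; split_ifs with h
  · exact h
  · simp

lemma trunc_diff (f : (Fin 2 → ℝ) → ℂ) (k : ℕ) (ξ : Fin 2 → ℝ) :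
    ‖(trunc f (k + 1) - trunc f k) ξ‖ ≤ 2 ^ (k + 1) := by
  simp only [Pi.sub_apply]
  by_cases h : ‖f ξ‖ ≤ 2 ^ k
  · have : ‖f ξ‖ ≤ 2 ^ (k + 1) := h.trans (by gcongr <;> norm_num)
    simp [trunc, h, this]
  · have : trunc f k ξ = 0 := by simp [trunc, h]
    rw [this, sub_zero]
    exact trunc_le' f (k + 1) ξ

lemma trunc_supp (f : (Fin 2 → ℝ) → ℂ) (k : ℕ) :
    Function.support (trunc f (k + 1) - trunc f k) ⊆ {ξ | (2:ℝ≥0∞) ^ k ≤ ‖f ξ‖ₑ} := by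
  intro ξ hξ
  by_contra h
  apply hξ
  have h' : ‖f ξ‖ₑ ≤ 2 ^ k := by simpa using (not_le.1 h).le
  have h1 : ‖f ξ‖ ≤ 2 ^ k := by
    rw [← ofReal_norm] at h'
    have : (2:ℝ≥0∞) ^ k = ENNReal.ofReal (2 ^ k) := by
      rw [ENNReal.ofReal_pow (by norm_num)]; simp
    rw [this, ENNReal.ofReal_le_ofReal_iff (by positivity)] at h'
    exact h'
  have : ‖f ξ‖ ≤ 2 ^ (k + 1) := h1.trans (by gcongr <;> norm_num)
  simp [trunc, h1, this]

lemma strong1 (p q : ℝ≥0∞) (q1 : ℝ) (hp : 1 ≤ p) (hpt : p ≠ ⊤) (hq : 1 ≤ q) (hqt : q ≠ ⊤)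
    (h5 : 5 < q1) (h6 : q1 < 6) (hqq : q1 ≤ q.toReal)
    (hpq : q.toReal < p.toReal * (q.toReal - q1 + 1)) :
    ∃ C : ℝ≥0∞, C ≠ ⊤ ∧ ∀ f : (Fin 2 → ℝ) → ℂ, Measurable f → eLpNorm f p mu ≤ 1 →
      eLpNorm (TT f) q volume ≤ C := by
  obtain ⟨B, hB, hlev⟩ := level_norm q1 q h5 h6 hqt hqq
  have hQ : 0 < q.toReal := by linarith
  have hp0 : p ≠ 0 := (zero_lt_one.trans_le hp).ne'
  set θ := (q.toReal - q1 + 1) / q.toReal with hθ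
  have hθ0 : 0 < θ := by rw [hθ]; apply div_pos <;> linarith
  have hpθ : 1 < p.toReal * θ := by
    rw [hθ, ← mul_div_assoc, lt_div_iff₀ hQ]; linarith
  set r : ℝ≥0∞ := (2:ℝ≥0∞) ^ (1 - p.toReal * θ) with hr
  have hr1 : r < 1 := ENNReal.rpow_lt_one_of_one_lt_of_neg (by norm_num) (by linarith)
  refine ⟨B + 2 * B * (1 - r)⁻¹, ?_, ?_⟩
  · refine ENNReal.add_ne_top.2 ⟨hB, ENNReal.mul_ne_top (ENNReal.mul_ne_top (by simp) hB) ?_⟩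
    rw [ENNReal.inv_ne_top]
    exact (tsub_pos_of_lt hr1).ne'
  intro f hf hf1
  have hfint : Integrable f mu := by
    have : MemLp f p mu := ⟨hf.aestronglyMeasurable, hf1.trans_lt ENNReal.one_lt_top⟩
    exact memLp_one_iff_integrable.1 (this.mono_exponent hp)
  have hti : ∀ k, Integrable (trunc f k) mu := fun k =>
    hfint.mono (trunc_meas hf k).aestronglyMeasurable (by filter_upwards with ξ using trunc_le f k ξ)
  have hA : ∀ k : ℕ, mu {ξ | (2:ℝ≥0∞) ^ k ≤ ‖f ξ‖ₑ} ≤ ((2:ℝ≥0∞) ^ k)⁻¹ ^ p.toReal := by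
    intro k
    refine (meas_ge_le_mul_pow_eLpNorm_enorm mu hp0 hpt hf.aestronglyMeasurable (by simp)
      (by intro h; simp at h)).trans ?_
    calc _ ≤ ((2:ℝ≥0∞) ^ k)⁻¹ ^ p.toReal * 1 ^ p.toReal := by gcongr
      _ = _ := by simp
  have hstep : ∀ k, eLpNorm (TT (trunc f (k + 1) - trunc f k)) q volume ≤ 2 * B * r ^ k := by
    intro k
    refine (hlev (2 ^ (k + 1)) (by positivity) _ ((trunc_meas hf _).sub (trunc_meas hf _)) ?_ _
      ((measure_mono (trunc_supp f k)).trans (hA k))).trans (le_of_eq ?_)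
    · intro ξ
      rw [← ofReal_norm]
      exact ENNReal.ofReal_le_ofReal (trunc_diff f k ξ)
    · have e1 : ENNReal.ofReal (2 ^ (k + 1)) = 2 * (2:ℝ≥0∞) ^ (k:ℝ) := by
        rw [ENNReal.ofReal_pow (by norm_num), pow_succ, ENNReal.rpow_natCast]; simp [mul_comm]
      rw [e1, ← ENNReal.rpow_natCast 2 k, ← ENNReal.rpow_neg, ← ENNReal.rpow_mul, ← ENNReal.rpow_mul,
        hr, ← ENNReal.rpow_natCast, ← ENNReal.rpow_mul]
      have e2 : (2:ℝ≥0∞) ^ ((1 - p.toReal * θ) * (k:ℝ)) = 2 ^ (k:ℝ) * 2 ^ (-(k:ℝ) * p.toReal * θ) := by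
        rw [← ENNReal.rpow_add _ _ (by norm_num) (by norm_num)]; congr 1; ring
      rw [e2]; ring
  have hsum : ∀ K, eLpNorm (TT (trunc f K)) q volume ≤ B + 2 * B * ∑ k ∈ Finset.range K, r ^ k := by
    intro K
    induction K with
    | zero =>
      have := hlev 1 one_pos (trunc f 0) (trunc_meas hf 0) (fun ξ => by
        rw [← ofReal_norm]
        exact ENNReal.ofReal_le_ofReal (by simpa using trunc_le' f 0 ξ)) 1 prob_le_one
      simpa using this
    | succ K ih =>
      have e : trunc f (K + 1) = trunc f K + (trunc f (K + 1) - trunc f K) := by abel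
      rw [e, TT_add (hti K) ((hti (K+1)).sub (hti K))]
      refine (eLpNorm_add_le (TT_meas (trunc_meas hf K)).aestronglyMeasurable
        (TT_meas ((trunc_meas hf _).sub (trunc_meas hf _))).aestronglyMeasurable hq).trans ?_
      rw [Finset.sum_range_succ, mul_add, ← add_assoc]
      gcongr
      exact hstep K
  have hlim : ∀ x, Filter.Tendsto (fun K => TT (trunc f K) x) Filter.atTop (nhds (TT f x)) := by
    intro x
    unfold TT
    apply tendsto_integral_of_dominated_convergence (fun ξ => ‖f ξ‖)
    · intro K; exact (TT_integrable (hti K) x).aestronglyMeasurable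
    · exact hfint.norm
    · intro K
      filter_upwards with ξ
      rw [norm_mul, norm_ee, one_mul]
      exact trunc_le f K ξ
    · filter_upwards with ξ
      apply Filter.Tendsto.const_mul
      apply tendsto_const_nhds.congr'
      obtain ⟨K, hK⟩ := pow_unbounded_of_one_lt ‖f ξ‖ (one_lt_two (α := ℝ))
      filter_upwards [Filter.eventually_ge_atTop K] with n hn
      have : ‖f ξ‖ ≤ 2 ^ n := hK.le.trans (by gcongr; norm_num)
      simp [trunc, this]
  refine (Lp.eLpNorm_lim_le_liminf_eLpNorm (fun K => (TT_meas (trunc_meas hf K)).aestronglyMeasurable) _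
    (by filter_upwards with x using hlim x)).trans ?_
  apply Filter.liminf_le_of_le (by isBoundedDefault)
  intro b hb
  obtain ⟨K, hK⟩ := hb.exists
  refine hK.trans ((hsum K).trans ?_)
  gcongr
  rw [← ENNReal.tsum_geometric]
  exact ENNReal.sum_le_tsum _

lemma strong2 (p q : ℝ≥0∞) (hp : 1 ≤ p) (C : ℝ≥0∞) (hC : C ≠ ⊤)
    (h : ∀ f : (Fin 2 → ℝ) → ℂ, Measurable f → eLpNorm f p mu ≤ 1 →
      eLpNorm (TT f) q volume ≤ C) (f : (Fin 2 → ℝ) → ℂ) (hf : Measurable f) :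
    eLpNorm (TT f) q volume ≤ (C + 1) * eLpNorm f p mu := by
  have hp0 : p ≠ 0 := (zero_lt_one.trans_le hp).ne'
  by_cases h0 : eLpNorm f p mu = 0
  · rw [eLpNorm_eq_zero_iff hf.aestronglyMeasurable hp0] at h0
    have : TT f = 0 := by
      ext x
      unfold TT
      apply integral_eq_zero_of_ae
      filter_upwards [h0] with ξ hξ
      simp [hξ]
    simp [this]
  by_cases ht : eLpNorm f p mu = ⊤
  · rw [ht, ENNReal.mul_top (by simp)]; exact le_top
  set N := (eLpNorm f p mu).toReal with hN
  have hNp : 0 < N := ENNReal.toReal_pos h0 ht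
  have hNe : eLpNorm f p mu = ENNReal.ofReal N := (ENNReal.ofReal_toReal ht).symm
  have e1 : ‖((N⁻¹:ℝ):ℂ)‖ₑ = ENNReal.ofReal N⁻¹ := by
    rw [← ofReal_norm, Complex.norm_real, Real.norm_of_nonneg (by positivity)]
  have := h (((N⁻¹:ℝ):ℂ) • f) (hf.const_smul _) (by
    rw [eLpNorm_const_smul, hNe, e1, ← ENNReal.ofReal_mul (by positivity), inv_mul_cancel₀ hNp.ne']
    simp)
  rw [TT_smul, eLpNorm_const_smul, e1, ENNReal.ofReal_inv_of_pos hNp, mul_comm, ← div_eq_mul_inv,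
    ENNReal.div_le_iff (by simpa using hNp) ENNReal.ofReal_ne_top, ← hNe] at this
  refine this.trans ?_
  gcongr
  exact le_self_add

lemma exists_exps (p q : ℝ≥0∞) (hp : 1 ≤ p) (hqt : q ≠ ⊤) (h5 : 5 < q) (h : 1 / p + 4 / q < 1) :
    ∃ (p' : ℝ≥0∞) (q1 : ℝ), 1 ≤ p' ∧ p' ≤ p ∧ p' ≠ ⊤ ∧ 5 < q1 ∧ q1 < 6 ∧ q1 ≤ q.toReal ∧
      q.toReal < p'.toReal * (q.toReal - q1 + 1) := by
  set Q := q.toReal with hQ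
  have hQ5 : 5 < Q := by
    have := ENNReal.toReal_strict_mono hqt h5
    simpa using this
  have hqe : q = ENNReal.ofReal Q := (ENNReal.ofReal_toReal hqt).symm
  -- find a finite exponent
  obtain ⟨P, hP1, hPp, hPQ⟩ : ∃ P : ℝ, 1 ≤ P ∧ ENNReal.ofReal P ≤ p ∧ Q < P * (Q - 4) := by
    by_cases hpt : p = ⊤
    · refine ⟨Q, by linarith, by simp [hpt], by nlinarith⟩
    · refine ⟨p.toReal, ?_, (ENNReal.ofReal_toReal hpt).le, ?_⟩
      · have := ENNReal.toReal_mono hpt hp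
        simpa using this
      · have hP0 : 0 < p.toReal := ENNReal.toReal_pos (zero_lt_one.trans_le hp).ne' hpt
        have h2 : ENNReal.ofReal (1 / p.toReal + 4 / Q) < 1 := by
          rw [ENNReal.ofReal_add (by positivity) (by positivity), ENNReal.ofReal_div_of_pos hP0,
            ENNReal.ofReal_div_of_pos (by linarith), ENNReal.ofReal_toReal hpt, ← hqe]
          simpa using h
        rw [ENNReal.ofReal_lt_one, div_add_div _ _ hP0.ne' (by linarith), div_lt_one (by positivity)] at h2
        linarith
  obtain ⟨ε, hε0, hε⟩ : ∃ ε : ℝ, 0 < ε ∧ P * ε = (P * (Q - 4) - Q) / 2 :=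
    ⟨(P * (Q - 4) - Q) / 2 / P, by apply div_pos <;> linarith, by field_simp⟩
  refine ⟨ENNReal.ofReal P, 5 + min ε (min (1/2) (Q - 5)), by simpa using hP1, hPp, ENNReal.ofReal_ne_top,
    ?_, ?_, ?_, ?_⟩
  · have : 0 < min ε (min (1/2) (Q - 5)) := by
      apply lt_min hε0 (lt_min (by norm_num) (by linarith))
    linarith
  · have := (min_le_right ε (min (1/2) (Q - 5))).trans (min_le_left _ _)
    linarith
  · have := (min_le_right ε (min (1/2) (Q - 5))).trans (min_le_right _ _)
    linarith
  · rw [ENNReal.toReal_ofReal (by linarith)]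
    have : P * min ε (min (1/2) (Q - 5)) ≤ P * ε := by
      gcongr; exact min_le_left _ _
    nlinarith

lemma suff (p q : ℝ≥0∞) (hp : 1 ≤ p) (hq : 1 ≤ q) (h5 : 5 < q) (h : 1 / p + 4 / q < 1) :
    ∃ C : ℝ≥0∞, C < ⊤ ∧ ∀ f : (Fin 2 → ℝ) → ℂ, Measurable f →
      eLpNorm (TT f) q volume ≤ C * eLpNorm f p volume := by
  have hmono : ∀ f : (Fin 2 → ℝ) → ℂ, eLpNorm f p mu ≤ eLpNorm f p volume := fun f =>
    eLpNorm_restrict_le f p volume _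
  by_cases hqt : q = ⊤
  · refine ⟨1, ENNReal.one_lt_top, fun f hf => ?_⟩
    subst hqt
    rw [one_mul]
    refine le_trans ?_ (hmono f)
    refine le_trans ?_ (eLpNorm_le_eLpNorm_of_exponent_le hp hf.aestronglyMeasurable)
    rw [eLpNorm_exponent_top, eLpNorm_one_eq_lintegral_enorm]
    exact eLpNormEssSup_le_of_ae_enorm_bound (by filter_upwards with x using TT_sup f x)
  · obtain ⟨p', q1, a1, a2, a3, a4, a5, a6, a7⟩ := exists_exps p q hp hqt h5 h
    obtain ⟨C, hC, hh⟩ := strong1 p' q q1 a1 a3 hq hqt a4 a5 a6 a7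
    refine ⟨C + 1, by simpa using hC.lt_top, fun f hf => ?_⟩
    refine (strong2 p' q a1 C hC hh f hf).trans ?_
    gcongr
    exact (eLpNorm_le_eLpNorm_of_exponent_le a2 hf.aestronglyMeasurable).trans (hmono f)

lemma ee_re (t : ℝ) : (ee t).re = Real.cos (2 * Real.pi * t) := by
  unfold ee
  rw [show 2 * (Real.pi : ℂ) * Complex.I * (t : ℂ) = ((2 * Real.pi * t : ℝ) : ℂ) * Complex.I by
    push_cast; ring]
  exact Complex.exp_ofReal_mul_I_re _

lemma ee_re_ge (t : ℝ) (ht : |t| ≤ 1 / 8) : 1 / 2 ≤ (ee t).re := by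
  rw [ee_re, ← Real.cos_abs, ← Real.cos_pi_div_three]
  have hpi := Real.pi_pos
  apply Real.cos_le_cos_of_nonneg_of_le_pi (abs_nonneg _) (by linarith)
  rw [abs_mul, abs_of_pos (by positivity)]
  nlinarith

/-- Indicator functions. -/
noncomputable def ind (S : Set (Fin 2 → ℝ)) : (Fin 2 → ℝ) → ℂ := S.indicator (fun _ => 1)

lemma ind_meas {S : Set (Fin 2 → ℝ)} (hS : MeasurableSet S) : Measurable (ind S) :=
  measurable_const.indicator hS

lemma ind_int {S : Set (Fin 2 → ℝ)} (hS : MeasurableSet S) : Integrable (ind S) mu :=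
  (integrable_const (1:ℂ)).indicator hS

lemma TT_ind {S : Set (Fin 2 → ℝ)} (hS : MeasurableSet S) (x : Fin (2 + 2) → ℝ) :
    TT (ind S) x = ∫ ξ in S, ee (ph x ξ) ∂mu := by
  unfold TT
  rw [← integral_indicator hS]
  congr 1; ext ξ
  by_cases h : ξ ∈ S <;> simp [ind, h]

lemma piece_lower {S : Set (Fin 2 → ℝ)} (hS : MeasurableSet S) (x : Fin (2 + 2) → ℝ) (c : ℝ)
    (h : ∀ ξ ∈ S, |ph x ξ - c| ≤ 1 / 8) : mu S / 2 ≤ ‖TT (ind S) x‖ₑ := by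
  have hi : Integrable (fun ξ => ee (ph x ξ - c)) (mu.restrict S) := by
    have := int_ee_meas (integrable_const (1:ℂ) (μ := mu.restrict S)) (φ := fun ξ => ph x ξ - c)
      ((ph_meas' x).sub measurable_const)
    simpa using this
  have e1 : ee (-c) * TT (ind S) x = ∫ ξ in S, ee (ph x ξ - c) ∂mu := by
    rw [TT_ind hS, ← integral_const_mul]
    congr 1; ext ξ
    rw [← ee_add]; congr 1; ring
  have e2 : ‖TT (ind S) x‖ = ‖∫ ξ in S, ee (ph x ξ - c) ∂mu‖ := by
    rw [← e1, norm_mul, norm_ee, one_mul]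
  have e3 : mu.real S / 2 ≤ ‖TT (ind S) x‖ := by
    rw [e2]
    refine le_trans ?_ (Complex.re_le_norm _)
    have e4 : (∫ ξ in S, ee (ph x ξ - c) ∂mu).re = ∫ ξ in S, (ee (ph x ξ - c)).re ∂mu :=
      (integral_re hi).symm
    rw [e4]
    calc mu.real S / 2 = ∫ ξ in S, (1/2 : ℝ) ∂mu := by simp; ring
      _ ≤ _ := by
        apply setIntegral_mono_on (integrable_const _) hi.re hS
        intro ξ hξ
        exact ee_re_ge _ (h ξ hξ)
  rw [← ofReal_norm]
  refine le_trans (le_of_eq ?_) (ENNReal.ofReal_le_ofReal e3)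
  rw [ENNReal.ofReal_div_of_pos two_pos, ofReal_measureReal]
  simp

lemma lint_lower (F : ℝ → ℝ≥0∞) (a b : ℝ) (K : ℝ≥0∞) (h : ∀ x ∈ Set.Icc a b, K ≤ F x) :
    K * ENNReal.ofReal (b - a) ≤ ∫⁻ x, F x := by
  calc K * ENNReal.ofReal (b - a) = ∫⁻ x in Set.Icc a b, K := by simp
    _ ≤ ∫⁻ x in Set.Icc a b, F x := setLIntegral_mono' measurableSet_Icc h
    _ ≤ _ := setLIntegral_le_lintegral _ _

/-- A rectangle in the unit square. -/
def rect (a b : ℝ) : Set (Fin 2 → ℝ) := {ξ | ξ 0 ∈ Set.Ico a b ∧ ξ 1 ∈ Set.Icc (0:ℝ) 1}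

lemma rect_eq (a b : ℝ) : rect a b = Set.pi Set.univ (fun i : Fin 2 => if i = 0 then Set.Ico a b else Set.Icc 0 1) := by
  ext ξ
  simp [rect, Set.mem_pi, Fin.forall_fin_two]

lemma rect_meas (a b : ℝ) : MeasurableSet (rect a b) := by
  rw [rect_eq]
  apply MeasurableSet.univ_pi
  intro i
  split_ifs
  · exact measurableSet_Ico
  · exact measurableSet_Icc

lemma rect_vol (a b : ℝ) : volume (rect a b) = ENNReal.ofReal (b - a) := by
  rw [rect_eq, volume_pi_pi]
  simp

lemma rect_sub (a b : ℝ) (ha : 0 ≤ a) (hb : b ≤ 1) : rect a b ⊆ Set.Icc 0 1 := by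
  rintro ξ ⟨h0, h1⟩
  constructor
  · intro i
    fin_cases i
    · exact ha.trans h0.1
    · exact h1.1
  · intro i
    fin_cases i
    · exact h0.2.le.trans hb
    · exact h1.2

lemma rect_mu (a b : ℝ) (ha : 0 ≤ a) (hb : b ≤ 1) : mu (rect a b) = ENNReal.ofReal (b - a) := by
  rw [mu, Measure.restrict_apply (rect_meas a b), Set.inter_eq_left.2 (rect_sub a b ha hb), rect_vol]

lemma nec1_aux (p q : ℝ≥0∞) (hq : 1 ≤ q) (C : ℝ≥0∞)
    (h : ∀ f : (Fin 2 → ℝ) → ℂ, Measurable f → Function.support f ⊆ Set.Icc 0 1 →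
      eLpNorm (TT f) q volume ≤ C * eLpNorm f p volume) (t : ℝ) (ht : 1 ≤ t) :
    ENNReal.ofReal (t⁻¹ / 2 * (t ^ 4 / 16 ^ 4) ^ (1 / q.toReal))
      ≤ C * ENNReal.ofReal (t⁻¹ ^ (1 / p.toReal)) := by
  have ht0 : 0 < t := by linarith
  have hti : t⁻¹ ≤ 1 := inv_le_one_of_one_le₀ ht
  have hS := rect_meas 0 t⁻¹
  have hmu := rect_mu 0 t⁻¹ le_rfl hti
  have h1 := h (ind (rect 0 t⁻¹)) (ind_meas hS) (by
    refine subset_trans ?_ (rect_sub 0 t⁻¹ le_rfl hti)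
    exact Set.support_indicator_subset)
  have h2 : eLpNorm (ind (rect 0 t⁻¹)) p volume ≤ ENNReal.ofReal (t⁻¹ ^ (1 / p.toReal)) := by
    refine (eLpNorm_indicator_const_le _ _).trans ?_
    rw [rect_vol, sub_zero, ENNReal.ofReal_rpow_of_pos (by positivity)]
    simp
  refine le_trans ?_ (h1.trans (by gcongr))
  set r : Fin (2 + 2) → ℝ := ![t / 32, 1 / 32, t ^ 2 / 32, t / 32] with hr
  set box : Set (Fin (2 + 2) → ℝ) := Set.Icc (-r) r with hbox
  have hbv : volume box = ENNReal.ofReal (t ^ 4 / 16 ^ 4) := by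
    rw [hbox, Real.volume_Icc_pi, ← ENNReal.ofReal_prod_of_nonneg]
    · congr 1
      rw [Fin.prod_univ_four]
      simp [hr]
      ring
    · intro i _
      fin_cases i <;> simp [hr] <;> positivity
  have hlow : ∀ x, ‖box.indicator (fun _ => ((t⁻¹ / 2 : ℝ) : ℂ)) x‖ₑ ≤ ‖TT (ind (rect 0 t⁻¹)) x‖ₑ := by
    intro x
    by_cases hx : x ∈ box
    · rw [Set.indicator_of_mem hx]
      have := piece_lower hS x 0 (by
        rintro ξ ⟨⟨a0, a1⟩, ⟨b0, b1⟩⟩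
        have g : ∀ i, |x i| ≤ r i := fun i => abs_le.2 ⟨hx.1 i, hx.2 i⟩
        have g0 : |x 0| ≤ t / 32 := g 0
        have g1 : |x 1| ≤ 1 / 32 := g 1
        have g2 : |x 2| ≤ t ^ 2 / 32 := g 2
        have g3 : |x 3| ≤ t / 32 := g 3
        have s0 : t * ξ 0 ≤ 1 := by
          calc t * ξ 0 ≤ t * t⁻¹ := by gcongr
            _ = 1 := mul_inv_cancel₀ ht0.ne'
        have k0 : |x 0 * ξ 0| ≤ 1 / 32 := by
          rw [abs_mul, abs_of_nonneg a0]
          calc |x 0| * ξ 0 ≤ t / 32 * ξ 0 := by gcongr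
            _ ≤ _ := by linarith
        have k1 : |x 1 * ξ 1| ≤ 1 / 32 := by
          rw [abs_mul, abs_of_nonneg b0]
          calc |x 1| * ξ 1 ≤ 1 / 32 * 1 := by gcongr
            _ ≤ _ := by linarith
        have k2 : |x 2 * ξ 0 ^ 2| ≤ 1 / 32 := by
          rw [abs_mul, abs_of_nonneg (by positivity : 0 ≤ ξ 0 ^ 2)]
          calc |x 2| * ξ 0 ^ 2 ≤ t ^ 2 / 32 * ξ 0 ^ 2 := by gcongr
            _ = (t * ξ 0) ^ 2 / 32 := by ring
            _ ≤ 1 ^ 2 / 32 := by gcongr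
            _ ≤ _ := by norm_num
        have k3 : |x 3 * (ξ 0 * ξ 1)| ≤ 1 / 32 := by
          rw [abs_mul, abs_of_nonneg (mul_nonneg a0 b0)]
          calc |x 3| * (ξ 0 * ξ 1) ≤ t / 32 * (ξ 0 * 1) := by gcongr
            _ ≤ _ := by linarith
        rw [sub_zero, ph]
        rw [abs_le] at *
        constructor <;> linarith)
      refine le_trans (le_of_eq ?_) this
      rw [hmu, sub_zero, ← ofReal_norm, Complex.norm_real, Real.norm_of_nonneg (by positivity),
        ENNReal.ofReal_div_of_pos two_pos]
      simp
    · rw [Set.indicator_of_notMem hx]; simp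
  refine le_trans (le_of_eq ?_) (eLpNorm_mono_enorm hlow)
  rw [eLpNorm_indicator_const' measurableSet_Icc _ (zero_lt_one.trans_le hq).ne', hbv,
    ENNReal.ofReal_rpow_of_pos (by positivity), ← ofReal_norm, Complex.norm_real,
    Real.norm_of_nonneg (by positivity), ← ENNReal.ofReal_mul (by positivity)]
  rw [hbv]
  simp; positivity

lemma nec1 (p q : ℝ≥0∞) (hp : 1 ≤ p) (hq : 1 ≤ q) (C : ℝ≥0∞) (hC : C < ⊤)
    (h : ∀ f : (Fin 2 → ℝ) → ℂ, Measurable f → Function.support f ⊆ Set.Icc 0 1 →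
      eLpNorm (TT f) q volume ≤ C * eLpNorm f p volume) : 1 / p + 4 / q ≤ 1 := by
  have hreal : ∀ r : ℝ≥0∞, 1 ≤ r → 1 / r = ENNReal.ofReal (1 / r.toReal) := by
    intro r hr
    by_cases hrt : r = ⊤
    · simp [hrt]
    · have : 0 < r.toReal := ENNReal.toReal_pos (zero_lt_one.trans_le hr).ne' hrt
      rw [ENNReal.ofReal_div_of_pos this, ENNReal.ofReal_toReal hrt]; simp
  have e4 : 4 / q = ENNReal.ofReal (4 * (1 / q.toReal)) := by
    rw [ENNReal.ofReal_mul (by norm_num), ← hreal q hq, mul_one_div]; simp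
  rw [hreal p hp, e4, ← ENNReal.ofReal_add (by positivity) (by positivity), ENNReal.ofReal_le_one]
  by_contra hcon
  push Not at hcon
  set α := 1 / p.toReal
  set β := 1 / q.toReal
  set s := α + 4 * β - 1 with hs
  have hs0 : 0 < s := by linarith
  set c : ℝ := 1 / 2 * (1 / 16 ^ 4) ^ β with hc
  have hc0 : 0 < c := by positivity
  obtain ⟨t, ht1, ht2⟩ := ((Filter.eventually_ge_atTop (1:ℝ)).and
    ((tendsto_rpow_atTop hs0).eventually_gt_atTop (C.toReal / c))).exists
  have key := nec1_aux p q hq C h t ht1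
  have ht0 : 0 < t := by linarith
  rw [← ENNReal.ofReal_toReal hC.ne, ← ENNReal.ofReal_mul ENNReal.toReal_nonneg,
    ENNReal.ofReal_le_ofReal_iff (by positivity)] at key
  rw [div_lt_iff₀ hc0] at ht2
  have e : t⁻¹ / 2 * (t ^ 4 / 16 ^ 4) ^ β = c * (t ^ s * t⁻¹ ^ α) := by
    rw [hc, div_eq_mul_one_div (t ^ 4), Real.mul_rpow (by positivity) (by positivity)]
    have : t ^ s * t⁻¹ ^ α = t⁻¹ * (t ^ 4) ^ β := by
      rw [Real.inv_rpow ht0.le, ← Real.rpow_neg ht0.le, ← Real.rpow_add ht0, ← Real.rpow_neg_one t,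
        ← Real.rpow_natCast t 4, ← Real.rpow_mul ht0.le, ← Real.rpow_add ht0]
      congr 1
      rw [hs]; push_cast; ring
    rw [this]; ring
  rw [e, ← mul_assoc] at key
  have := le_of_mul_le_mul_right key (by positivity)
  linarith

/-- The `k`-th vertical strip. -/
def strip (n k : ℕ) : Set (Fin 2 → ℝ) := rect ((k:ℝ) / n) (((k:ℝ) + 1) / n)

/-- Sum of strips. -/
noncomputable def fe (n : ℕ) (ε : Finset ℕ) : (Fin 2 → ℝ) → ℂ := ∑ k ∈ ε, ind (strip n k)

lemma strip_sub (n k : ℕ) (hk : k < n) : strip n k ⊆ Set.Icc 0 1 := by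
  have hn : (0:ℝ) < n := by exact_mod_cast (by omega : 0 < n)
  apply rect_sub _ _ (by positivity)
  rw [div_le_one hn]
  exact_mod_cast hk

lemma strip_mu (n k : ℕ) (hk : k < n) : mu (strip n k) = ENNReal.ofReal (1 / n) := by
  have hn : (0:ℝ) < n := by exact_mod_cast (by omega : 0 < n)
  rw [strip, rect_mu _ _ (by positivity)]
  · congr 1; ring
  · rw [div_le_one hn]
    exact_mod_cast hk

lemma fe_meas (n : ℕ) (ε : Finset ℕ) : Measurable (fe n ε) := by
  have e : fe n ε = fun ξ => ∑ k ∈ ε, ind (strip n k) ξ := by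
    ext ξ
    rw [fe, Finset.sum_apply]
  rw [e]
  exact Finset.measurable_fun_sum _ (fun k _ => ind_meas (rect_meas _ _))

lemma fe_int (n : ℕ) (ε : Finset ℕ) : Integrable (fe n ε) mu := by
  unfold fe
  exact integrable_finsetSum' _ (fun k _ => ind_int (rect_meas _ _))

lemma fe_supp (n : ℕ) (ε : Finset ℕ) (hε : ε ⊆ Finset.range n) (ξ : Fin 2 → ℝ)
    (hξ : ξ ∉ Set.Icc (0 : Fin 2 → ℝ) 1) : fe n ε ξ = 0 := by
  unfold fe
  rw [Finset.sum_apply]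
  apply Finset.sum_eq_zero
  intro k hk
  apply Set.indicator_of_notMem
  intro h
  exact hξ (strip_sub n k (Finset.mem_range.1 (hε hk)) h)

lemma fe_bdd (n : ℕ) (hn : 0 < n) (ε : Finset ℕ) (ξ : Fin 2 → ℝ) : ‖fe n ε ξ‖ ≤ 1 := by
  have hn' : (0:ℝ) < n := by exact_mod_cast hn
  unfold fe
  rw [Finset.sum_apply]
  calc _ ≤ ∑ k ∈ ε, ‖ind (strip n k) ξ‖ := norm_sum_le _ _
    _ ≤ ∑ k ∈ ε, (if k = ⌊(n:ℝ) * ξ 0⌋₊ then (1:ℝ) else 0) := by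
        apply Finset.sum_le_sum
        intro k _
        by_cases h : ξ ∈ strip n k
        · have : k = ⌊(n:ℝ) * ξ 0⌋₊ := by
            obtain ⟨⟨h0, h1⟩, _⟩ := h
            rw [div_le_iff₀ hn'] at h0
            rw [lt_div_iff₀ hn'] at h1
            symm
            rw [Nat.floor_eq_iff (by nlinarith [(Nat.cast_nonneg k : (0:ℝ) ≤ k)])]
            constructor <;> linarith
          rw [if_pos this]
          simp [ind, h]
        · rw [ind, Set.indicator_of_notMem h]
          split_ifs <;> simp
    _ ≤ 1 := by
        rw [Finset.sum_ite_eq']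
        split_ifs <;> simp

lemma fe_norm (n : ℕ) (hn : 0 < n) (ε : Finset ℕ) (hε : ε ⊆ Finset.range n) (p : ℝ≥0∞) :
    eLpNorm (fe n ε) p volume ≤ 1 := by
  have h1 : ∀ ξ, ‖fe n ε ξ‖ ≤ ‖(Set.Icc (0 : Fin 2 → ℝ) 1).indicator (fun _ => (1:ℂ)) ξ‖ := by
    intro ξ
    by_cases h : ξ ∈ Set.Icc (0 : Fin 2 → ℝ) 1
    · rw [Set.indicator_of_mem h]; simpa using fe_bdd n hn ε ξ
    · rw [fe_supp n ε hε ξ h]; simp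
  refine (eLpNorm_mono h1).trans ((eLpNorm_indicator_const_le _ _).trans ?_)
  simp [Real.volume_Icc_pi]

lemma half_pow (u w : ℂ) (Q : ℝ) (hQ : 0 ≤ Q) :
    (‖w‖ₑ / 2) ^ Q ≤ ‖u‖ₑ ^ Q + ‖w + u‖ₑ ^ Q := by
  have h : ‖w‖ₑ ≤ ‖w + u‖ₑ + ‖u‖ₑ := by
    calc ‖w‖ₑ = ‖(w + u) - u‖ₑ := by ring_nf
      _ ≤ _ := enorm_sub_le
  rcases le_total ‖u‖ₑ ‖w + u‖ₑ with h' | h'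
  · refine le_trans ?_ le_add_self
    gcongr
    apply ENNReal.div_le_of_le_mul
    rw [mul_two]
    exact h.trans (by gcongr)
  · refine le_trans ?_ le_self_add
    gcongr
    apply ENNReal.div_le_of_le_mul
    rw [mul_two]
    exact h.trans (by gcongr)

lemma avg_lower (n j : ℕ) (hj : j < n) (Q : ℝ) (hQ : 0 ≤ Q) (x : Fin (2 + 2) → ℝ) :
    2 ^ (n - 1) * (‖TT (ind (strip n j)) x‖ₑ / 2) ^ Q
      ≤ ∑ ε ∈ (Finset.range n).powerset, ‖TT (fe n ε) x‖ₑ ^ Q := by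
  have hjm : j ∈ Finset.range n := Finset.mem_range.2 hj
  rw [← Finset.insert_erase hjm, Finset.sum_powerset_insert (Finset.notMem_erase j _),
    ← Finset.sum_add_distrib]
  calc _ = ∑ ε ∈ ((Finset.range n).erase j).powerset, (‖TT (ind (strip n j)) x‖ₑ / 2) ^ Q := by
        rw [Finset.sum_const, Finset.card_powerset, Finset.card_erase_of_mem hjm, Finset.card_range,
          nsmul_eq_mul]
        push_cast
        rfl
    _ ≤ _ := by
        apply Finset.sum_le_sum
        intro ε hε
        have hjε : j ∉ ε := fun h => Finset.notMem_erase j _ (Finset.mem_powerset.1 hε h)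
        have e : fe n (insert j ε) = ind (strip n j) + fe n ε := by
          unfold fe; rw [Finset.sum_insert hjε]
        have ha := TT_add (f := ind (strip n j)) (ind_int (rect_meas _ _)) (fe_int n ε)
        rw [e, ha]
        exact half_pow _ _ Q hQ

lemma strip_lower (n : ℕ) (hn : 0 < n) (x : Fin (2 + 2) → ℝ) (j : ℕ) (hj : j < n)
    (h0 : |x 0 + 2 * ((j:ℝ) / n) * x 2| ≤ n / 64) (h1 : |x 1 + ((j:ℝ) / n) * x 3| ≤ 1 / 32)
    (h2 : |x 2| ≤ (n:ℝ) ^ 2 / 64) (h3 : |x 3| ≤ n / 32) :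
    ENNReal.ofReal (1 / n) / 2 ≤ ‖TT (ind (strip n j)) x‖ₑ := by
  have hn' : (0:ℝ) < n := by exact_mod_cast hn
  rw [← strip_mu n j hj]
  set a : ℝ := (j:ℝ) / n with ha
  refine piece_lower (rect_meas _ _) x (x 0 * a + x 2 * a ^ 2) ?_
  rintro ξ ⟨⟨a0, a1⟩, ⟨b0, b1⟩⟩
  set s := ξ 0 - a with hs
  have hs0 : 0 ≤ s := by rw [hs]; linarith
  have hs1 : n * s ≤ 1 := by
    have : ((j:ℝ) + 1) / n = a + 1 / n := by rw [ha]; ring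
    rw [this] at a1
    have : s ≤ 1 / n := by linarith
    calc n * s ≤ n * (1 / n) := by gcongr
      _ = 1 := by field_simp
  have e : ph x ξ - (x 0 * a + x 2 * a ^ 2) =
      (x 0 + 2 * a * x 2) * s + x 2 * s ^ 2 + (x 1 + a * x 3) * ξ 1 + x 3 * (s * ξ 1) := by
    have : ξ 0 = a + s := by rw [hs]; ring
    rw [ph, this]; ring
  have k0 : |(x 0 + 2 * a * x 2) * s| ≤ 1 / 32 := by
    rw [abs_mul, abs_of_nonneg hs0]
    calc _ ≤ n / 64 * s := by gcongr
      _ ≤ _ := by linarith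
  have k2 : |x 2 * s ^ 2| ≤ 1 / 32 := by
    rw [abs_mul, abs_of_nonneg (by positivity : 0 ≤ s ^ 2)]
    calc _ ≤ (n:ℝ) ^ 2 / 64 * s ^ 2 := by gcongr
      _ = (n * s) ^ 2 / 64 := by ring
      _ ≤ 1 ^ 2 / 64 := by gcongr
      _ ≤ _ := by norm_num
  have k1 : |(x 1 + a * x 3) * ξ 1| ≤ 1 / 32 := by
    rw [abs_mul, abs_of_nonneg b0]
    calc _ ≤ 1 / 32 * (1:ℝ) := by gcongr
      _ ≤ _ := by linarith
  have k3 : |x 3 * (s * ξ 1)| ≤ 1 / 32 := by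
    rw [abs_mul, abs_of_nonneg (mul_nonneg hs0 b0)]
    calc _ ≤ n / 32 * (s * 1) := by gcongr
      _ ≤ _ := by linarith
  rw [e]
  clear h0 h1 h2 h3
  rw [abs_le] at *
  constructor <;> linarith

lemma nec2_aux (n : ℕ) (hn : 0 < n) (Q : ℝ) (hQ : 0 ≤ Q) :
    2 ^ (n - 1) * ENNReal.ofReal ((1 / (4 * n)) ^ Q * (n ^ 5 / (32 * 32 * 128 * 64))) ≤
      ∑ ε ∈ (Finset.range n).powerset, ∫⁻ x, ‖TT (fe n ε) x‖ₑ ^ Q := by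
  have hn' : (0:ℝ) < n := by exact_mod_cast hn
  set F : (Fin (2 + 2) → ℝ) → ℝ≥0∞ := fun x => ∑ ε ∈ (Finset.range n).powerset, ‖TT (fe n ε) x‖ₑ ^ Q with hF
  have hm : ∀ ε, Measurable (fun x => ‖TT (fe n ε) x‖ₑ ^ Q) := fun ε =>
    (TT_meas (fe_meas n ε)).enorm.pow_const Q
  have hFm : Measurable F := Finset.measurable_fun_sum _ (fun ε _ => hm ε)
  rw [← lintegral_finsetSum _ (fun ε _ => hm ε)]
  change _ ≤ ∫⁻ x, F x
  rw [lint4 F hFm]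
  set K : ℝ≥0∞ := 2 ^ (n - 1) * ENNReal.ofReal ((1 / (4 * n)) ^ Q) with hK
  have hpt : ∀ x3 ∈ Set.Icc ((n:ℝ) / 64) (n / 32), ∀ x1 ∈ Set.Icc (-(n:ℝ) / 128) 0,
      ∀ x2 ∈ Set.Icc (-(n:ℝ) ^ 2 / 64) ((n:ℝ) ^ 2 / 64),
      K * ENNReal.ofReal (n / 32) ≤ ∫⁻ x0, F ![x0, x1, x2, x3] := by
    intro x3 h3 x1 h1 x2 h2
    have hx3 : 0 < x3 := lt_of_lt_of_le (by positivity) h3.1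
    set j := ⌊(-x1) * n / x3⌋₊ with hj
    have hnn : 0 ≤ (-x1) * n / x3 := by
      apply div_nonneg _ hx3.le
      exact mul_nonneg (by linarith [h1.2]) hn'.le
    have j1 : (j:ℝ) ≤ (-x1) * n / x3 := Nat.floor_le hnn
    have j2 : (-x1) * n / x3 < j + 1 := Nat.lt_floor_add_one _
    have hjn : j < n := by
      have : (j:ℝ) < n := by
        refine j1.trans_lt ?_
        rw [div_lt_iff₀ hx3]
        have := h1.1
        have := h3.1
        nlinarith
      exact_mod_cast this
    rw [le_div_iff₀ hx3] at j1
    rw [div_lt_iff₀ hx3] at j2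
    have hlen : (n:ℝ) / 32 = (-(2 * ((j:ℝ) / n) * x2) + n / 64) - (-(2 * ((j:ℝ) / n) * x2) - n / 64) := by ring
    rw [hlen]
    apply lint_lower
    intro x0 h0
    refine le_trans ?_ (avg_lower n j hjn Q hQ _)
    rw [hK]
    gcongr
    have hl := strip_lower n hn ![x0, x1, x2, x3] j hjn
      (by
        change |x0 + 2 * ((j:ℝ) / n) * x2| ≤ n / 64
        rw [abs_le]; constructor <;> linarith [h0.1, h0.2])
      (by
        change |x1 + (j:ℝ) / n * x3| ≤ 1 / 32
        have e : x1 + (j:ℝ) / n * x3 = (x1 * n + j * x3) / n := by field_simp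
        rw [e, abs_le, le_div_iff₀ hn', div_le_iff₀ hn']
        have := h3.2
        constructor <;> linarith)
      (by
        change |x2| ≤ (n:ℝ) ^ 2 / 64
        rw [abs_le]; constructor <;> linarith [h2.1, h2.2])
      (by
        change |x3| ≤ (n:ℝ) / 32
        rw [abs_of_pos hx3]; exact h3.2)
    rw [← ENNReal.ofReal_rpow_of_pos (by positivity)]
    gcongr
    refine le_trans (le_of_eq ?_) (ENNReal.div_le_div_right hl 2)
    rw [show (2:ℝ≥0∞) = ENNReal.ofReal 2 by simp, ← ENNReal.ofReal_div_of_pos two_pos,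
      ← ENNReal.ofReal_div_of_pos two_pos]
    congr 1
    field_simp
    norm_num
  have r2 : ∀ x3 ∈ Set.Icc ((n:ℝ) / 64) (n / 32), ∀ x1 ∈ Set.Icc (-(n:ℝ) / 128) 0,
      K * ENNReal.ofReal (n / 32) * ENNReal.ofReal ((n:ℝ) ^ 2 / 64 - (-(n:ℝ) ^ 2 / 64)) ≤
        ∫⁻ x2, ∫⁻ x0, F ![x0, x1, x2, x3] :=
    fun x3 h3 x1 h1 => lint_lower _ _ _ _ (fun x2 h2 => hpt x3 h3 x1 h1 x2 h2)
  have r1 : ∀ x3 ∈ Set.Icc ((n:ℝ) / 64) (n / 32),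
      K * ENNReal.ofReal (n / 32) * ENNReal.ofReal ((n:ℝ) ^ 2 / 64 - (-(n:ℝ) ^ 2 / 64))
        * ENNReal.ofReal (0 - (-(n:ℝ) / 128)) ≤
        ∫⁻ x1, ∫⁻ x2, ∫⁻ x0, F ![x0, x1, x2, x3] :=
    fun x3 h3 => lint_lower _ _ _ _ (fun x1 h1 => r2 x3 h3 x1 h1)
  have r0 := lint_lower _ _ _ _ r1
  refine le_trans (le_of_eq ?_) r0
  have i1 : (n:ℝ) ^ 2 / 64 - (-(n:ℝ) ^ 2 / 64) = n ^ 2 / 32 := by ring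
  have i2 : 0 - (-(n:ℝ) / 128) = n / 128 := by ring
  have i3 : (n:ℝ) / 32 - n / 64 = n / 64 := by ring
  rw [hK, i1, i2, i3]
  simp only [mul_assoc (2 ^ (n - 1) : ℝ≥0∞)]
  rw [← ENNReal.ofReal_mul (by positivity), ← ENNReal.ofReal_mul (by positivity),
    ← ENNReal.ofReal_mul (by positivity), ← ENNReal.ofReal_mul (by positivity)]
  congr 2
  ring

lemma nec2 (p q : ℝ≥0∞) (hq : 1 ≤ q) (C : ℝ≥0∞) (hC : C < ⊤)
    (h : ∀ f : (Fin 2 → ℝ) → ℂ, Measurable f → Function.support f ⊆ Set.Icc 0 1 →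
      eLpNorm (TT f) q volume ≤ C * eLpNorm f p volume) : 5 ≤ q := by
  by_contra hcon
  push Not at hcon
  have hqt : q ≠ ⊤ := hcon.ne_top
  have hq0 : q ≠ 0 := (zero_lt_one.trans_le hq).ne'
  set Q := q.toReal with hQ
  have hQ0 : 0 < Q := ENNReal.toReal_pos hq0 hqt
  have hQ5 : Q < 5 := by
    have := ENNReal.toReal_strict_mono (by simp) hcon
    simpa using this
  have hup : ∀ (n : ℕ) (_ : 0 < n), ∀ ε ∈ (Finset.range n).powerset,
      ∫⁻ x, ‖TT (fe n ε) x‖ₑ ^ Q ≤ C ^ Q := by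
    intro n hn ε hε
    have hε' := Finset.mem_powerset.1 hε
    have h1 := h (fe n ε) (fe_meas n ε) (by
      intro ξ hξ
      by_contra hc
      exact hξ (fe_supp n ε hε' ξ hc))
    have h2 : eLpNorm (TT (fe n ε)) q volume ≤ C := by
      refine h1.trans ?_
      calc _ ≤ C * 1 := by gcongr; exact fe_norm n hn ε hε' p
        _ = C := mul_one C
    rw [eLpNorm_eq_lintegral_rpow_enorm_toReal hq0 hqt] at h2
    calc ∫⁻ x, ‖TT (fe n ε) x‖ₑ ^ Q = ((∫⁻ x, ‖TT (fe n ε) x‖ₑ ^ Q) ^ (1 / Q)) ^ Q := by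
          rw [← ENNReal.rpow_mul, one_div_mul_cancel hQ0.ne', ENNReal.rpow_one]
      _ ≤ C ^ Q := by gcongr
  set c : ℝ := (1 / 4) ^ Q / (32 * 32 * 128 * 64) with hc
  have hc0 : 0 < c := by positivity
  have main : ∀ n : ℕ, 0 < n → c * (n:ℝ) ^ (5 - Q) ≤ 2 * C.toReal ^ Q := by
    intro n hn
    have hn' : (0:ℝ) < n := by exact_mod_cast hn
    have h1 := (nec2_aux n hn Q hQ0.le).trans (Finset.sum_le_sum (hup n hn))
    rw [Finset.sum_const, Finset.card_powerset, Finset.card_range, nsmul_eq_mul] at h1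
    have e : (((2 ^ n : ℕ) : ℝ≥0∞)) * C ^ Q = 2 ^ (n - 1) * (2 * C ^ Q) := by
      push_cast
      nth_rewrite 1 [show n = (n - 1) + 1 by omega]
      rw [pow_succ]; ring
    rw [e, ENNReal.mul_le_mul_iff_right (by simp) (by simp)] at h1
    rw [← ENNReal.ofReal_toReal hC.ne, ENNReal.ofReal_rpow_of_nonneg ENNReal.toReal_nonneg hQ0.le,
      show (2:ℝ≥0∞) = ENNReal.ofReal 2 by simp, ← ENNReal.ofReal_mul (by norm_num),
      ENNReal.ofReal_le_ofReal_iff (by positivity)] at h1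
    refine le_trans (le_of_eq ?_) h1
    rw [hc, Real.rpow_sub hn', one_div (4 * (n:ℝ)), Real.inv_rpow (by positivity),
      Real.mul_rpow (by norm_num) hn'.le, one_div, Real.inv_rpow (by norm_num),
      show (n:ℝ) ^ (5:ℝ) = n ^ 5 by norm_cast]
    field_simp
  obtain ⟨n, hn1, hn2⟩ := ((Filter.eventually_gt_atTop 0).and
    (((tendsto_rpow_atTop (by linarith : 0 < 5 - Q)).comp
      (tendsto_natCast_atTop_atTop (R := ℝ))).eventually_gt_atTop (2 * C.toReal ^ Q / c))).exists
  have h1 := main n hn1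
  simp only [Function.comp] at hn2
  rw [div_lt_iff₀ hc0] at hn2
  linarith

/-- restriction estimates for `Q(ξ) = (ξ₁², ξ₁ξ₂)` on `ℝ²`
(0-indexed in Lean): the estimate holds for `q > 5`, `1/p + 4/q < 1`, and
conversely any pair `(p, q)` for which the estimate holds with a finite
constant must satisfy `q ≥ 5` and `1/p + 4/q ≤ 1`. -/
theorem statement15 (p q : ℝ≥0∞) (hp : 1 ≤ p) (hq : 1 ≤ q) :
    ((5 < q ∧ 1 / p + 4 / q < 1) →
      ∃ C : ℝ≥0∞, C < ⊤ ∧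
        ∀ f : (Fin 2 → ℝ) → ℂ, Measurable f →
          Function.support f ⊆ Set.Icc 0 1 →
          eLpNorm (extOp 2 2
            (fun ξ j => if j = 0 then ξ 0 ^ 2 else ξ 0 * ξ 1) f)
            q volume ≤
            C * eLpNorm f p volume) ∧
    (∀ C : ℝ≥0∞, C < ⊤ →
      (∀ f : (Fin 2 → ℝ) → ℂ, Measurable f →
        Function.support f ⊆ Set.Icc 0 1 →
        eLpNorm (extOp 2 2
          (fun ξ j => if j = 0 then ξ 0 ^ 2 else ξ 0 * ξ 1) f)
          q volume ≤
          C * eLpNorm f p volume) →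
      5 ≤ q ∧ 1 / p + 4 / q ≤ 1) := by
  constructor
  · rintro ⟨h5, h⟩
    obtain ⟨C, hC, hh⟩ := suff p q hp hq h5 h
    refine ⟨C, hC, fun f hf _ => ?_⟩
    have e := extOp_eq f
    unfold Qf at e
    rw [e]
    exact hh f hf
  · intro C hC h
    have h' : ∀ f : (Fin 2 → ℝ) → ℂ, Measurable f → Function.support f ⊆ Set.Icc 0 1 →
        eLpNorm (TT f) q volume ≤ C * eLpNorm f p volume := by
      intro f hf hs
      rw [← extOp_eq f]
      exact h f hf hs
    exact ⟨nec2 p q hq C hC h', nec1 p q hp hq C hC h'⟩
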